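/- arXiv:1901.09752 — 2 statements merged into one kernel-verified Lean document; each statement's English description precedes it below -/
import Mathlib

section
/- Let u : ℝⁿ → ℝ be a C² function satisfying the minimal surface equation div(Du / √(1 + |Du|²)) = 0 at every point of ℝⁿ, and suppose its gradient is bounded: there is M ∈ ℝ with |Du(x)| ≤ M for all x ∈ ℝⁿ. Then u is affine linear. -/
/-!
For a vector `v`, the difference `w = u (· + v) - u` is bounded by `M * |v|`. Since the flux
`p ↦ p / √(1 + |p|²)` is Lipschitz and strongly monotone on `|p| ≤ M`, it solves a uniformly
elliptic equation in divergence form on all of `ℝⁿ`. Bounded entire solutions of such an equation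
are constant, so `Du` is constant.

This Liouville property follows from a scale-invariant weak Harnack inequality: if `0 ≤ w ≤ 1`
and `w ≥ 1/2` on half of the ball of radius `2`, then `w ≥ c` on the unit ball. Testing the
equation with `ζ² / w` bounds the Dirichlet energy of `-log w`, the Poincaré inequality turns
this into an `L²` bound, and Moser iteration turns the latter into a supremum bound. Applied to `w`
or to `1 - w` at all scales, the inequality shrinks the oscillation of `w` over `ℝⁿ` by a fixed
factor, so this oscillation vanishes.
-/

open scoped RealInnerProductSpace

/-- `j`-th first partial derivative of `u : ℝⁿ → ℝ`. -/
noncomputable def pd {n : ℕ} (u : EuclideanSpace ℝ (Fin n) → ℝ)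
    (x : EuclideanSpace ℝ (Fin n)) (j : Fin n) : ℝ :=
  fderiv ℝ u x (EuclideanSpace.single j 1)

/-- Second partial derivative `u_{x_j x_k}` of `u : ℝⁿ → ℝ`. -/
noncomputable def pd2 {n : ℕ} (u : EuclideanSpace ℝ (Fin n) → ℝ)
    (x : EuclideanSpace ℝ (Fin n)) (j k : Fin n) : ℝ :=
  fderiv ℝ (fun y => fderiv ℝ u y (EuclideanSpace.single j 1)) x (EuclideanSpace.single k 1)

open MeasureTheory Set Module Metric Filter Topology
open scoped ENNReal NNReal

/-! ### Poincaré inequality -/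

theorem measure_mul_lintegral_enorm_rpow_le {α G : Type*} [MeasurableSpace α]
    [NormedAddCommGroup G] (ν : Measure α) {F : α → G} {p : ℝ} (hp : 1 ≤ p) {A : Set α}
    (hA : MeasurableSet A) {c : ℝ≥0∞} (hc : ∀ y ∈ A, ‖F y‖ₑ ≤ c) :
    ν A * ∫⁻ x, ‖F x‖ₑ ^ p ∂ν ≤
      2 ^ (p - 1) * (∫⁻ x, ∫⁻ y, ‖F x - F y‖ₑ ^ p ∂ν ∂ν + c ^ p * ν A * ν univ) := by
  have : 0 ≤ p := zero_le_one.trans hp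
  have h2 : (2 : ℝ≥0∞) ^ (p - 1) ≠ ∞ := by finiteness
  have hpt (x : α) : ∀ y ∈ A, ‖F x‖ₑ ^ p ≤ 2 ^ (p - 1) * (‖F x - F y‖ₑ ^ p + c ^ p) := by
    intro y hy
    calc ‖F x‖ₑ ^ p ≤ (‖F x - F y‖ₑ + c) ^ p := by
          gcongr
          calc ‖F x‖ₑ = ‖F x - F y + F y‖ₑ := by rw [sub_add_cancel]
            _ ≤ ‖F x - F y‖ₑ + ‖F y‖ₑ := enorm_add_le _ _
            _ ≤ ‖F x - F y‖ₑ + c := by gcongr; exact hc y hy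
      _ ≤ _ := ENNReal.rpow_add_le_mul_rpow_add_rpow _ _ hp
  have hslice (x : α) : ν A * ‖F x‖ₑ ^ p ≤
      2 ^ (p - 1) * (∫⁻ y, ‖F x - F y‖ₑ ^ p ∂ν + c ^ p * ν A) :=
    calc ν A * ‖F x‖ₑ ^ p = ∫⁻ _ in A, ‖F x‖ₑ ^ p ∂ν := by rw [setLIntegral_const, mul_comm]
      _ ≤ ∫⁻ y in A, 2 ^ (p - 1) * (‖F x - F y‖ₑ ^ p + c ^ p) ∂ν :=
        setLIntegral_mono' hA (hpt x)
      _ = 2 ^ (p - 1) * (∫⁻ y in A, ‖F x - F y‖ₑ ^ p ∂ν + c ^ p * ν A) := by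
        rw [lintegral_const_mul' _ _ h2, lintegral_add_right _ measurable_const, setLIntegral_const]
      _ ≤ _ := by gcongr; exact Measure.restrict_le_self
  calc ν A * ∫⁻ x, ‖F x‖ₑ ^ p ∂ν ≤ ∫⁻ x, ν A * ‖F x‖ₑ ^ p ∂ν := lintegral_const_mul_le _ _
    _ ≤ ∫⁻ x, 2 ^ (p - 1) * (∫⁻ y, ‖F x - F y‖ₑ ^ p ∂ν + c ^ p * ν A) ∂ν := lintegral_mono hslice
    _ = _ := by
      rw [lintegral_const_mul' _ _ h2, lintegral_add_right _ measurable_const, lintegral_const]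

section Poincare

variable {E : Type*} [NormedAddCommGroup E] [NormedSpace ℝ E]
variable {G : Type*} [NormedAddCommGroup G] [NormedSpace ℝ G]

theorem enorm_sub_le_mul_lintegral_enorm_fderiv_segment {F : E → G} (hF : ContDiff ℝ 1 F)
    (x y : E) :
    ‖F x - F y‖ₑ ≤
      ‖x - y‖ₑ * ∫⁻ t in Icc (0 : ℝ) 1, ‖fderiv ℝ F (t • x + (1 - t) • y)‖ₑ := by
  set γ : ℝ → E := fun t ↦ t • x + (1 - t) • y with hγ
  have hγ' (t : ℝ) : HasDerivAt γ (x - y) t := by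
    simpa [hγ, sub_eq_add_neg] using
      ((hasDerivAt_id t).smul_const x).fun_add (((hasDerivAt_id t).const_sub 1).smul_const y)
  have hderiv (t : ℝ) : deriv (F ∘ γ) t = fderiv ℝ F (γ t) (x - y) :=
    ((hF.differentiable one_ne_zero _).hasFDerivAt.comp_hasDerivAt t (hγ' t)).deriv
  have hFγ : ContDiff ℝ 1 (F ∘ γ) := hF.comp (by fun_prop)
  calc ‖F x - F y‖ₑ = ‖(F ∘ γ) 1 - (F ∘ γ) 0‖ₑ := by simp [hγ]
    _ ≤ ∫⁻ t in Icc (0 : ℝ) 1, ‖deriv (F ∘ γ) t‖ₑ :=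
      enorm_sub_le_lintegral_deriv_of_contDiffOn_Icc hFγ.contDiffOn zero_le_one
    _ ≤ ∫⁻ t in Icc (0 : ℝ) 1, ‖x - y‖ₑ * ‖fderiv ℝ F (γ t)‖ₑ := by
      refine lintegral_mono fun t ↦ ?_
      rw [hderiv, mul_comm]
      exact (fderiv ℝ F (γ t)).le_opENorm _
    _ = ‖x - y‖ₑ * ∫⁻ t in Icc (0 : ℝ) 1, ‖fderiv ℝ F (γ t)‖ₑ :=
      lintegral_const_mul' _ _ enorm_ne_top

theorem enorm_sub_rpow_le_mul_lintegral_enorm_fderiv_segment {F : E → G} (hF : ContDiff ℝ 1 F)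
    {p : ℝ} (hp : 1 ≤ p) (x y : E) :
    ‖F x - F y‖ₑ ^ p ≤
      ‖x - y‖ₑ ^ p * ∫⁻ t in Icc (0 : ℝ) 1, ‖fderiv ℝ F (t • x + (1 - t) • y)‖ₑ ^ p := by
  have hp0 : 0 < p := zero_lt_one.trans_le hp
  have : IsProbabilityMeasure (volume.restrict (Icc (0 : ℝ) 1)) := ⟨by simp⟩
  have hcont : Continuous fun t : ℝ ↦ fderiv ℝ F (t • x + (1 - t) • y) :=
    (hF.continuous_fderiv one_ne_zero).comp (by fun_prop)
  have hjensen := eLpNorm'_le_eLpNorm'_of_exponent_le zero_lt_one hp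
    (volume.restrict (Icc (0 : ℝ) 1)) hcont.aestronglyMeasurable
  simp only [eLpNorm', ENNReal.rpow_one, div_one] at hjensen
  calc ‖F x - F y‖ₑ ^ p
      ≤ (‖x - y‖ₑ * ∫⁻ t in Icc (0 : ℝ) 1, ‖fderiv ℝ F (t • x + (1 - t) • y)‖ₑ) ^ p := by
        gcongr
        exact enorm_sub_le_mul_lintegral_enorm_fderiv_segment hF x y
    _ ≤ (‖x - y‖ₑ *
          (∫⁻ t in Icc (0 : ℝ) 1, ‖fderiv ℝ F (t • x + (1 - t) • y)‖ₑ ^ p) ^ (1 / p)) ^ p := by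
        gcongr
    _ = _ := by
        rw [ENNReal.mul_rpow_of_nonneg _ _ hp0.le, ← ENNReal.rpow_mul, one_div_mul_cancel hp0.ne',
          ENNReal.rpow_one]

variable [FiniteDimensional ℝ E] [MeasurableSpace E] [BorelSpace E]
  (μ : Measure E) [μ.IsAddHaarMeasure]

theorem lintegral_comp_smul_add_le {g : E → ℝ≥0∞} (hg : Measurable g) {t : ℝ} (ht : 1 / 2 ≤ t)
    (z : E) : ∫⁻ x, g (t • x + z) ∂μ ≤ 2 ^ finrank ℝ E * ∫⁻ x, g x ∂μ := by
  have ht0 : 0 < t := by linarith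
  have hscale : ENNReal.ofReal |(t ^ finrank ℝ E)⁻¹| ≤ 2 ^ finrank ℝ E := by
    rw [← ENNReal.ofReal_ofNat 2, ← ENNReal.ofReal_pow zero_le_two, abs_of_pos (by positivity),
      ← inv_pow]
    gcongr
    rw [inv_le_comm₀ ht0 two_pos, ← one_div]
    exact ht
  calc ∫⁻ x, g (t • x + z) ∂μ = ∫⁻ x, g (x + z) ∂(μ.map (t • ·)) :=
        (lintegral_map (f := fun x ↦ g (x + z)) (hg.comp (measurable_add_const z))
          (measurable_const_smul t)).symm
    _ = ENNReal.ofReal |(t ^ finrank ℝ E)⁻¹| * ∫⁻ x, g x ∂μ := by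
        rw [Measure.map_addHaar_smul μ ht0.ne', lintegral_smul_measure,
          lintegral_add_right_eq_self, smul_eq_mul]
    _ ≤ 2 ^ finrank ℝ E * ∫⁻ x, g x ∂μ := by gcongr

-- Of the two coefficients `t` and `1 - t`, one is at least `1 / 2`; integrate first in the
-- variable it multiplies.
theorem setLIntegral_setLIntegral_comp_lineMap_le {g : E → ℝ≥0∞} (hg : Measurable g) (s : Set E)
    (t : ℝ) :
    ∫⁻ x in s, ∫⁻ y in s, g (t • x + (1 - t) • y) ∂μ ∂μ ≤
      2 ^ finrank ℝ E * μ s * ∫⁻ x, g x ∂μ := by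
  have slice {r : ℝ} (hr : 1 / 2 ≤ r) :
      ∫⁻ y in s, ∫⁻ x in s, g (r • x + (1 - r) • y) ∂μ ∂μ ≤
        2 ^ finrank ℝ E * μ s * ∫⁻ x, g x ∂μ :=
    calc ∫⁻ y in s, ∫⁻ x in s, g (r • x + (1 - r) • y) ∂μ ∂μ
        ≤ ∫⁻ _ in s, 2 ^ finrank ℝ E * ∫⁻ x, g x ∂μ ∂μ :=
          lintegral_mono fun y ↦ (setLIntegral_le_lintegral _ _).trans
            (lintegral_comp_smul_add_le μ hg hr _)
      _ = 2 ^ finrank ℝ E * μ s * ∫⁻ x, g x ∂μ := by rw [setLIntegral_const]; ring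
  rcases le_total (1 / 2) t with ht | ht
  · rw [lintegral_lintegral_swap (by exact (hg.comp (by fun_prop)).aemeasurable)]
    exact slice ht
  · simpa only [sub_sub_cancel, add_comm] using slice (r := 1 - t) (by linarith)

theorem lintegral_lintegral_enorm_sub_rpow_le_of_convex {F : E → G} (hF : ContDiff ℝ 1 F)
    {p : ℝ} (hp : 1 ≤ p) {s : Set E} (hs : MeasurableSet s) (hconv : Convex ℝ s) :
    ∫⁻ x in s, ∫⁻ y in s, ‖F x - F y‖ₑ ^ p ∂μ ∂μ ≤
      ediam s ^ p * (2 ^ finrank ℝ E * μ s * ∫⁻ x in s, ‖fderiv ℝ F x‖ₑ ^ p ∂μ) := by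
  have : 0 ≤ p := zero_le_one.trans hp
  set g : E → ℝ≥0∞ := s.indicator fun x ↦ ‖fderiv ℝ F x‖ₑ ^ p
  have hg : Measurable g :=
    ((hF.continuous_fderiv one_ne_zero).enorm.measurable.pow_const p).indicator hs
  have hpt : ∀ x ∈ s, ∀ y ∈ s, ‖F x - F y‖ₑ ^ p ≤
      ediam s ^ p * ∫⁻ t in Icc (0 : ℝ) 1, g (t • x + (1 - t) • y) := by
    refine fun x hx y hy ↦
      (enorm_sub_rpow_le_mul_lintegral_enorm_fderiv_segment hF hp x y).trans ?_
    gcongr ?_ ^ p * ?_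
    · rw [← edist_eq_enorm_sub]
      exact edist_le_ediam_of_mem hx hy
    · refine setLIntegral_mono' measurableSet_Icc fun t ht ↦ ?_
      have hmem := hconv hx hy ht.1 (sub_nonneg.2 ht.2) (add_sub_cancel t 1)
      exact (indicator_of_mem hmem fun z ↦ ‖fderiv ℝ F z‖ₑ ^ p).ge
  have hm : Measurable fun q : (E × E) × ℝ ↦ g (q.2 • q.1.1 + (1 - q.2) • q.1.2) :=
    hg.comp (by fun_prop)
  have hmt (t : ℝ) : Measurable fun q : E × E ↦ g (t • q.1 + (1 - t) • q.2) :=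
    hg.comp (by fun_prop)
  calc ∫⁻ x in s, ∫⁻ y in s, ‖F x - F y‖ₑ ^ p ∂μ ∂μ
      ≤ ∫⁻ x in s, ∫⁻ y in s,
          ediam s ^ p * (∫⁻ t in Icc (0 : ℝ) 1, g (t • x + (1 - t) • y)) ∂μ ∂μ :=
        setLIntegral_mono' hs fun x hx ↦ setLIntegral_mono' hs fun y hy ↦ hpt x hx y hy
    _ = ediam s ^ p * ∫⁻ t in Icc (0 : ℝ) 1, ∫⁻ x in s, ∫⁻ y in s,
          g (t • x + (1 - t) • y) ∂μ ∂μ := by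
        rw [← lintegral_prod _ (hm.lintegral_prod_right'.const_mul _).aemeasurable,
          lintegral_const_mul _ hm.lintegral_prod_right',
          lintegral_lintegral_swap hm.aemeasurable]
        exact congrArg _ (lintegral_congr fun t ↦ lintegral_prod _ (hmt t).aemeasurable)
    _ ≤ ediam s ^ p * ∫⁻ _ in Icc (0 : ℝ) 1, 2 ^ finrank ℝ E * μ s * ∫⁻ x, g x ∂μ := by
        gcongr with t
        exact setLIntegral_setLIntegral_comp_lineMap_le μ hg s t
    _ = _ := by simp [g, lintegral_indicator hs]

end Poincare

/-! ### Elliptic fluxes and the Caccioppoli inequality -/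

theorem integrable_sq_mul_of_hasCompactSupport {X : Type*} [TopologicalSpace X]
    [MeasurableSpace X] [OpensMeasurableSpace X] {μ : Measure X} [IsFiniteMeasureOnCompacts μ]
    {ζ f : X → ℝ} (hζ : Continuous ζ) (hζc : HasCompactSupport ζ) (hf : Continuous f) :
    Integrable (fun x ↦ ζ x ^ 2 * f x) μ := by
  have hζ2c : HasCompactSupport fun x ↦ ζ x ^ 2 :=
    hζc.comp_left (g := fun t : ℝ ↦ t ^ 2) (by simp)
  exact Continuous.integrable_of_hasCompactSupport (by fun_prop) hζ2c.mul_right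

section Flux

variable {E : Type*} [NormedAddCommGroup E] [NormedSpace ℝ E]

theorem contDiff_one_of_hasFDerivAt_smul_fderiv {w g a : E → ℝ} (hw : ContDiff ℝ 1 w)
    (ha : Continuous a) (hg : ∀ x, HasFDerivAt g (a x • fderiv ℝ w x) x) : ContDiff ℝ 1 g :=
  contDiff_one_iff_hasFDerivAt.2
    ⟨fun x ↦ a x • fderiv ℝ w x, ha.smul (hw.continuous_fderiv one_ne_zero), hg⟩

variable [MeasurableSpace E]

/-- A flux for `w` is a vector field `V` which is weakly divergence free and comparable to the
differential of `w`. It stands for a solution of `div (A Dw) = 0` in which `A` is uniformly elliptic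
with constants `lam` and `Lam`, and `V = A Dw`; only the field `V` matters, not the coefficients. -/
structure IsEllipticFlux (μ : Measure E) (lam Lam : ℝ) (w : E → ℝ) (V : E → E) : Prop where
  contDiff : ContDiff ℝ 1 w
  continuous_flux : Continuous V
  coercive : ∀ x, lam * ‖fderiv ℝ w x‖ ^ 2 ≤ fderiv ℝ w x (V x)
  norm_flux_le : ∀ x, ‖V x‖ ≤ Lam * ‖fderiv ℝ w x‖
  integral_fderiv_flux : ∀ φ : E → ℝ, ContDiff ℝ 1 φ → HasCompactSupport φ →
    ∫ x, fderiv ℝ φ x (V x) ∂μ = 0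

/-- A Caccioppoli inequality for all powers `F ^ p` with `p ≥ 2`, with a constant `Q` uniform in
`p`: the input of Moser's iteration. It holds for `F = -log w` when `w ≤ 1` is a positive
solution. -/
structure HasPowerEnergyBound (μ : Measure E) (Q : ℝ) (F : E → ℝ) : Prop where
  contDiff : ContDiff ℝ 1 F
  nonneg : ∀ x, 0 ≤ F x
  energy_le : ∀ p : ℝ, 2 ≤ p → ∀ ζ : E → ℝ, ContDiff ℝ 1 ζ → HasCompactSupport ζ →
    ∫ x, ζ x ^ 2 * (F x ^ (p - 2) * ‖fderiv ℝ F x‖ ^ 2) ∂μ ≤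
      Q * ∫ x, F x ^ p * ‖fderiv ℝ ζ x‖ ^ 2 ∂μ

theorem HasPowerEnergyBound.contDiff_rpow {μ : Measure E} {Q : ℝ} {F : E → ℝ}
    (h : HasPowerEnergyBound μ Q F) {p : ℝ} (hp : 1 ≤ p) : ContDiff ℝ 1 fun x ↦ F x ^ p :=
  h.contDiff.rpow_const_of_le (by simpa using hp)

namespace IsEllipticFlux

variable {μ : Measure E} {lam Lam : ℝ} {w : E → ℝ} {V : E → E}

theorem const_mul_add_const (h : IsEllipticFlux μ lam Lam w V) (a b : ℝ) :
    IsEllipticFlux μ lam Lam (fun x ↦ a * w x + b) (fun x ↦ a • V x) := by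
  have hD (x : E) : fderiv ℝ (fun x ↦ a * w x + b) x = a • fderiv ℝ w x := by
    rw [fderiv_add_const, fderiv_const_mul (h.contDiff.differentiable one_ne_zero x)]
  refine ⟨(contDiff_const.mul h.contDiff).add contDiff_const, h.continuous_flux.const_smul a,
    fun x ↦ ?_, fun x ↦ ?_, fun φ hφ hφc ↦ ?_⟩
  · have := mul_le_mul_of_nonneg_left (h.coercive x) (sq_nonneg a)
    simp only [hD, norm_smul, mul_pow, Real.norm_eq_abs, sq_abs, smul_apply, map_smul,
      smul_eq_mul]
    linarith
  · have := mul_le_mul_of_nonneg_left (h.norm_flux_le x) (abs_nonneg a)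
    simp only [hD, norm_smul, Real.norm_eq_abs]
    linarith
  · simp only [map_smul, integral_smul, h.integral_fderiv_flux φ hφ hφc, smul_zero]

variable [BorelSpace E]

theorem comp_smul [FiniteDimensional ℝ E] [μ.IsAddHaarMeasure]
    (h : IsEllipticFlux μ lam Lam w V) {R : ℝ} (hR : R ≠ 0) :
    IsEllipticFlux μ lam Lam (fun x ↦ w (R • x)) (fun x ↦ R • V (R • x)) := by
  have hD (f : E → ℝ) (r : ℝ) (x : E) : fderiv ℝ (fun x ↦ f (r • x)) x = r • fderiv ℝ f (r • x) :=
    fderiv_comp_smul r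
  refine ⟨h.contDiff.comp (by fun_prop),
    (h.continuous_flux.comp (by fun_prop)).const_smul R, fun x ↦ ?_, fun x ↦ ?_,
    fun φ hφ hφc ↦ ?_⟩
  · have := mul_le_mul_of_nonneg_left (h.coercive (R • x)) (sq_nonneg R)
    simp only [hD, norm_smul, mul_pow, Real.norm_eq_abs, sq_abs, smul_apply, map_smul,
      smul_eq_mul]
    linarith
  · have := mul_le_mul_of_nonneg_left (h.norm_flux_le (R • x)) (abs_nonneg R)
    simp only [hD, norm_smul, Real.norm_eq_abs]
    linarith
  · have hψ := h.integral_fderiv_flux (fun y ↦ φ (R⁻¹ • y)) (hφ.comp (by fun_prop))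
      (hφc.comp_homeomorph (Homeomorph.smulOfNeZero R⁻¹ (inv_ne_zero hR)))
    have hscale := Measure.integral_comp_smul μ
      (fun y ↦ fderiv ℝ (fun y ↦ φ (R⁻¹ • y)) y (V y)) R
    rw [hψ, smul_zero] at hscale
    simp only [hD, inv_smul_smul₀ hR, smul_apply, integral_smul] at hscale
    simp only [map_smul, integral_smul]
    rw [(smul_eq_zero_iff_right (inv_ne_zero hR)).1 hscale, smul_zero]

theorem caccioppoli_pointwise (hlam : 0 < lam) {a β ζ g W Z d e : ℝ} (ha : 0 ≤ a) (hβ : 0 ≤ β)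
    (hg : g ^ 2 ≤ a * β) (hd : lam * W ^ 2 ≤ d) (he : |e| ≤ Z * (Lam * W)) :
    lam / 2 * (ζ ^ 2 * (a * W ^ 2)) ≤
      (ζ ^ 2 * a * d + 2 * ζ * g * e) + 2 * Lam ^ 2 / lam * (β * Z ^ 2) := by
  set P : ℝ := lam / 2 * (ζ ^ 2 * (a * W ^ 2))
  set T : ℝ := 2 * Lam ^ 2 / lam * (β * Z ^ 2)
  have hPT : 4 * (P * T) = 4 * ζ ^ 2 * ((a * β) * (Z * (Lam * W)) ^ 2) := by
    simp only [P, T]; field_simp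
  have hcross : (2 * ζ * g * e) ^ 2 ≤ (P + T) ^ 2 :=
    calc (2 * ζ * g * e) ^ 2 = 4 * ζ ^ 2 * (g ^ 2 * |e| ^ 2) := by rw [sq_abs]; ring
      _ ≤ 4 * ζ ^ 2 * ((a * β) * (Z * (Lam * W)) ^ 2) := by gcongr
      _ = 4 * (P * T) := hPT.symm
      _ ≤ (P + T) ^ 2 := by linarith [sq_nonneg (P - T)]
  have : 0 ≤ T := by positivity
  have hmain : 2 * P ≤ ζ ^ 2 * a * d :=
    calc 2 * P = ζ ^ 2 * a * (lam * W ^ 2) := by simp only [P]; ring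
      _ ≤ ζ ^ 2 * a * d := by gcongr
  linarith [neg_le_of_abs_le (abs_le_of_sq_le_sq hcross (by positivity))]

-- Test the equation with `ζ ^ 2 * g`.
theorem integral_sq_mul_le (h : IsEllipticFlux μ lam Lam w V) [IsFiniteMeasureOnCompacts μ]
    (hlam : 0 < lam) {g a β : E → ℝ} (ha : Continuous a) (hβ : Continuous β)
    (ha0 : ∀ x, 0 ≤ a x) (hβ0 : ∀ x, 0 ≤ β x)
    (hg : ∀ x, HasFDerivAt g (a x • fderiv ℝ w x) x) (hgab : ∀ x, g x ^ 2 ≤ a x * β x)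
    {ζ : E → ℝ} (hζ : ContDiff ℝ 1 ζ) (hζc : HasCompactSupport ζ) :
    ∫ x, ζ x ^ 2 * (a x * ‖fderiv ℝ w x‖ ^ 2) ∂μ ≤
      (2 * Lam / lam) ^ 2 * ∫ x, β x * ‖fderiv ℝ ζ x‖ ^ 2 ∂μ := by
  have hg1 : ContDiff ℝ 1 g := contDiff_one_of_hasFDerivAt_smul_fderiv h.contDiff ha hg
  set φ : E → ℝ := fun x ↦ ζ x ^ 2 * g x
  have hφ : ContDiff ℝ 1 φ := (hζ.pow 2).mul hg1
  have hφc : HasCompactSupport φ :=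
    (hζc.comp_left (g := fun t : ℝ ↦ t ^ 2) (by simp)).mul_right
  have hDφ (x : E) : fderiv ℝ φ x (V x) =
      ζ x ^ 2 * a x * fderiv ℝ w x (V x) + 2 * ζ x * g x * fderiv ℝ ζ x (V x) := by
    have := (((hζ.differentiable one_ne_zero x).hasFDerivAt.pow 2).mul (hg x)).fderiv
    rw [show fderiv ℝ φ x = _ from this]
    simp only [Nat.add_one_sub_one, pow_one, nsmul_eq_mul, Nat.cast_ofNat, add_apply, smul_apply,
      smul_eq_mul]
    ring
  have hcw : Continuous (fderiv ℝ w) := h.contDiff.continuous_fderiv one_ne_zero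
  have : Continuous (fderiv ℝ ζ) := hζ.continuous_fderiv one_ne_zero
  have hV := h.continuous_flux
  have hφi : Integrable (fun x ↦ fderiv ℝ φ x (V x)) μ :=
    ((hφ.continuous_fderiv one_ne_zero).clm_apply hV).integrable_of_hasCompactSupport
      (hφc.fderiv ℝ |>.mono' fun x hx ↦ subset_closure fun h0 ↦ hx (by simp [h0]))
  have hβi : Integrable (fun x ↦ β x * ‖fderiv ℝ ζ x‖ ^ 2) μ :=
    (by fun_prop : Continuous _).integrable_of_hasCompactSupport
      ((hζc.fderiv ℝ).norm.comp_left (g := fun t : ℝ ↦ t ^ 2) (by simp)).mul_left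
  have hai : Integrable (fun x ↦ ζ x ^ 2 * (a x * ‖fderiv ℝ w x‖ ^ 2)) μ :=
    integrable_sq_mul_of_hasCompactSupport hζ.continuous hζc (by fun_prop)
  have hint := integral_mono (hai.const_mul (lam / 2))
    (hφi.add (hβi.const_mul (2 * Lam ^ 2 / lam))) fun x ↦ by
      have he : |fderiv ℝ ζ x (V x)| ≤ ‖fderiv ℝ ζ x‖ * (Lam * ‖fderiv ℝ w x‖) :=
        ((fderiv ℝ ζ x).le_opNorm (V x)).trans (by gcongr; exact h.norm_flux_le x)
      simpa only [Pi.add_apply, hDφ] using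
        caccioppoli_pointwise hlam (ha0 x) (hβ0 x) (hgab x) (h.coercive x) he
  rw [integral_const_mul, integral_add' hφi (hβi.const_mul _), integral_const_mul,
    h.integral_fderiv_flux φ hφ hφc, zero_add] at hint
  calc _ = 2 / lam * (lam / 2 * ∫ x, ζ x ^ 2 * (a x * ‖fderiv ℝ w x‖ ^ 2) ∂μ) := by field_simp
    _ ≤ 2 / lam * (2 * Lam ^ 2 / lam * ∫ x, β x * ‖fderiv ℝ ζ x‖ ^ 2 ∂μ) := by gcongr
    _ = _ := by field_simp

end IsEllipticFlux

end Flux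

-- With `g = -(-log t) ^ (p - 1) / t`, the next two lemmas say `g ^ 2 ≤ g' * (-log t) ^ p`, the
-- condition on a test function in `IsEllipticFlux.integral_sq_mul_le`.
theorem hasDerivAt_neg_neg_log_rpow_mul_inv {p t : ℝ} (hp : 2 ≤ p) (ht : 0 < t) :
    HasDerivAt (fun s ↦ -((-Real.log s) ^ (p - 1) * s⁻¹))
      (((p - 1) * (-Real.log t) ^ (p - 2) + (-Real.log t) ^ (p - 1)) * (t ^ 2)⁻¹) t := by
  have hpow := (Real.hasDerivAt_log ht.ne').fun_neg.rpow_const (p := p - 1) (Or.inr (by linarith))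
  refine (hpow.mul (hasDerivAt_inv ht.ne')).fun_neg.congr_deriv ?_
  rw [show p - 1 - 1 = p - 2 by ring]
  field_simp
  ring

theorem sq_neg_log_rpow_mul_inv_le {p t : ℝ} (hp : 2 ≤ p) (ht : 0 < t) (ht1 : t ≤ 1) :
    (-((-Real.log t) ^ (p - 1) * t⁻¹)) ^ 2 ≤
      ((p - 1) * (-Real.log t) ^ (p - 2) + (-Real.log t) ^ (p - 1)) * (t ^ 2)⁻¹ *
        (-Real.log t) ^ p := by
  have hL : 0 ≤ -Real.log t := neg_nonneg.2 (Real.log_nonpos ht.le ht1)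
  set L := -Real.log t
  have hsplit : (L ^ (p - 1)) ^ 2 = L ^ (p - 2) * L ^ p := by
    rw [← Real.rpow_mul_natCast hL, ← Real.rpow_add_of_nonneg hL (by linarith) (by linarith)]
    congr 1
    push_cast
    ring
  calc (-(L ^ (p - 1) * t⁻¹)) ^ 2 = (1 * L ^ (p - 2) + 0) * (t ^ 2)⁻¹ * L ^ p := by
        rw [neg_sq, mul_pow, hsplit]; ring
    _ ≤ _ := by gcongr <;> first | positivity | linarith


theorem norm_fderiv_log_sq {E : Type*} [NormedAddCommGroup E] [NormedSpace ℝ E] {w : E → ℝ}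
    {x : E} (hw : DifferentiableAt ℝ w x) (hx : w x ≠ 0) :
    ‖fderiv ℝ (fun y ↦ Real.log (w y)) x‖ ^ 2 = (w x ^ 2)⁻¹ * ‖fderiv ℝ w x‖ ^ 2 := by
  rw [(hw.hasFDerivAt.log hx).fderiv, norm_smul, mul_pow, norm_inv, Real.norm_eq_abs, inv_pow,
    sq_abs]

section FluxLog

variable {E : Type*} [NormedAddCommGroup E] [NormedSpace ℝ E] [MeasurableSpace E] [BorelSpace E]
  {μ : Measure E} {lam Lam : ℝ} {w : E → ℝ} {V : E → E}

namespace IsEllipticFlux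

theorem integral_sq_mul_norm_fderiv_log_sq_le [IsFiniteMeasureOnCompacts μ]
    (h : IsEllipticFlux μ lam Lam w V) (hlam : 0 < lam) (hw : ∀ x, 0 < w x) {ζ : E → ℝ}
    (hζ : ContDiff ℝ 1 ζ) (hζc : HasCompactSupport ζ) :
    ∫ x, ζ x ^ 2 * ‖fderiv ℝ (fun y ↦ Real.log (w y)) x‖ ^ 2 ∂μ ≤
      (2 * Lam / lam) ^ 2 * ∫ x, ‖fderiv ℝ ζ x‖ ^ 2 ∂μ := by
  have hw0 (x : E) : w x ≠ 0 := (hw x).ne'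
  have hdw (x : E) : HasFDerivAt w (fderiv ℝ w x) x :=
    (h.contDiff.differentiable one_ne_zero x).hasFDerivAt
  have hg (x : E) : HasFDerivAt (fun y ↦ -(w y)⁻¹) ((w x ^ 2)⁻¹ • fderiv ℝ w x) x := by
    rw [← neg_neg (w x ^ 2)⁻¹]
    exact (hasDerivAt_inv (hw0 x)).fun_neg.comp_hasFDerivAt x (hdw x)
  simpa only [norm_fderiv_log_sq (hdw _).differentiableAt (hw0 _), Pi.one_apply, one_mul] using
    h.integral_sq_mul_le hlam (a := fun x ↦ (w x ^ 2)⁻¹) (β := 1)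
      ((h.contDiff.continuous.pow 2).inv₀ fun x ↦ by simp [hw0])
      continuous_one (fun x ↦ inv_nonneg.2 (sq_nonneg _)) (fun _ ↦ zero_le_one) hg
      (fun x ↦ by simp) hζ hζc

theorem hasPowerEnergyBound_neg_log [IsFiniteMeasureOnCompacts μ]
    (h : IsEllipticFlux μ lam Lam w V) (hlam : 0 < lam) (hw : ∀ x, 0 < w x) (hw1 : ∀ x, w x ≤ 1) :
    HasPowerEnergyBound μ ((2 * Lam / lam) ^ 2) (fun x ↦ -Real.log (w x)) := by
  have hw0 (x : E) : w x ≠ 0 := (hw x).ne'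
  set F : E → ℝ := fun x ↦ -Real.log (w x)
  have hF0 (x : E) : 0 ≤ F x := neg_nonneg.2 (Real.log_nonpos (hw x).le (hw1 x))
  have hF1 : ContDiff ℝ 1 F := (h.contDiff.log hw0).neg
  have hdw (x : E) : HasFDerivAt w (fderiv ℝ w x) x :=
    (h.contDiff.differentiable one_ne_zero x).hasFDerivAt
  have hdF (x : E) : ‖fderiv ℝ F x‖ ^ 2 = (w x ^ 2)⁻¹ * ‖fderiv ℝ w x‖ ^ 2 := by
    rw [fderiv_fun_neg, norm_neg, norm_fderiv_log_sq (hdw x).differentiableAt (hw0 x)]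
  refine ⟨hF1, hF0, fun p hp ζ hζ hζc ↦ ?_⟩
  set a : E → ℝ := fun x ↦ ((p - 1) * F x ^ (p - 2) + F x ^ (p - 1)) * (w x ^ 2)⁻¹
  have hFp {q : ℝ} (hq : 0 ≤ q) : Continuous fun x ↦ F x ^ q :=
    hF1.continuous.rpow_const fun _ ↦ Or.inr hq
  have ha : Continuous a :=
    ((continuous_const.mul (hFp (by linarith))).add (hFp (by linarith))).mul
      ((h.contDiff.continuous.pow 2).inv₀ fun x ↦ by simp [hw0])
  have hFa (x : E) : F x ^ (p - 2) * (w x ^ 2)⁻¹ ≤ a x := by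
    refine mul_le_mul_of_nonneg_right ?_ (by positivity)
    nlinarith [Real.rpow_nonneg (hF0 x) (p - 2), Real.rpow_nonneg (hF0 x) (p - 1)]
  have hcw := h.contDiff.continuous_fderiv one_ne_zero
  have hcF := hF1.continuous_fderiv one_ne_zero
  have hζF := integrable_sq_mul_of_hasCompactSupport (μ := μ) hζ.continuous hζc
    ((hFp (by linarith : 0 ≤ p - 2)).mul (hcF.norm.pow 2))
  have hζa := integrable_sq_mul_of_hasCompactSupport (μ := μ) hζ.continuous hζc
    (ha.mul (hcw.norm.pow 2))
  refine (integral_mono hζF hζa fun x ↦ ?_).trans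
    (h.integral_sq_mul_le hlam ha (hFp (by linarith : 0 ≤ p))
      (fun x ↦ (mul_nonneg (Real.rpow_nonneg (hF0 x) _) (by positivity)).trans (hFa x))
      (fun x ↦ Real.rpow_nonneg (hF0 x) _)
      (fun x ↦ (hasDerivAt_neg_neg_log_rpow_mul_inv hp (hw x)).comp_hasFDerivAt x (hdw x))
      (fun x ↦ sq_neg_log_rpow_mul_inv_le hp (hw x) (hw1 x)) hζ hζc)
  calc ζ x ^ 2 * (F x ^ (p - 2) * ‖fderiv ℝ F x‖ ^ 2)
      = ζ x ^ 2 * (F x ^ (p - 2) * (w x ^ 2)⁻¹ * ‖fderiv ℝ w x‖ ^ 2) := by rw [hdF, mul_assoc]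
    _ ≤ ζ x ^ 2 * (a x * ‖fderiv ℝ w x‖ ^ 2) := by gcongr; exact hFa x

end IsEllipticFlux

end FluxLog

/-! ### Moser iteration -/

theorem exists_integral_norm_rpow_le_rpow_integral_norm_fderiv {E : Type*}
    [NormedAddCommGroup E] [NormedSpace ℝ E] [FiniteDimensional ℝ E] [MeasurableSpace E]
    [BorelSpace E] (μ : Measure E) [μ.IsAddHaarMeasure] (G : Type*) [NormedAddCommGroup G]
    [NormedSpace ℝ G] {χ : ℝ} (hχ : (finrank ℝ E : ℝ).HolderConjugate χ) :
    ∃ S : ℝ, 0 ≤ S ∧ ∀ Ψ : E → G, ContDiff ℝ 1 Ψ → HasCompactSupport Ψ →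
      ∫ x, ‖Ψ x‖ ^ χ ∂μ ≤ (S * ∫ x, ‖fderiv ℝ Ψ x‖ ∂μ) ^ χ := by
  have hχ0 : 0 < χ := hχ.symm.pos
  set C : ℝ≥0 := lintegralPowLePowLIntegralFDerivConst μ χ
  refine ⟨(C : ℝ) ^ χ⁻¹, by positivity, fun Ψ hΨ hΨc ↦ ?_⟩
  have hi : Integrable (fun x ↦ fderiv ℝ Ψ x) μ :=
    (hΨ.continuous_fderiv one_ne_zero).integrable_of_hasCompactSupport (hΨc.fderiv ℝ)
  have h0 : 0 ≤ ∫ x, ‖fderiv ℝ Ψ x‖ ∂μ := integral_nonneg fun x ↦ norm_nonneg _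
  have hSob := lintegral_pow_le_pow_lintegral_fderiv μ hΨ hΨc hχ
  rw [Real.mul_rpow (by positivity) h0, Real.rpow_inv_rpow C.coe_nonneg hχ0.ne',
    integral_eq_lintegral_of_nonneg_ae (.of_forall fun x ↦ by positivity)
      (hΨ.continuous.norm.rpow_const fun _ ↦ Or.inr hχ0.le).aestronglyMeasurable]
  refine ENNReal.toReal_le_of_le_ofReal (by positivity) ?_
  rw [ENNReal.ofReal_mul C.coe_nonneg, ENNReal.ofReal_coe_nnreal,
    ← ENNReal.ofReal_rpow_of_nonneg h0 hχ0.le, ofReal_integral_norm_eq_lintegral_enorm hi]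
  simpa only [← ENNReal.ofReal_rpow_of_nonneg (norm_nonneg _) hχ0.le, ofReal_norm] using hSob

section Moser

variable {E : Type*} [NormedAddCommGroup E] [NormedSpace ℝ E] [MeasurableSpace E]

namespace HasPowerEnergyBound

variable {μ : Measure E} {Q : ℝ} {F : E → ℝ}

theorem norm_fderiv_rpow_mul_sq_le (h : HasPowerEnergyBound μ Q F) {p : ℝ} (hp : 2 ≤ p)
    {ζ : E → ℝ} (hζ : ContDiff ℝ 1 ζ) (x : E) :
    ‖fderiv ℝ (fun y ↦ F y ^ p * ζ y ^ 2) x‖ ≤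
      p / 2 * (ζ x ^ 2 * (F x ^ (p - 2) * ‖fderiv ℝ F x‖ ^ 2)) +
        (p / 2 + 1) * (F x ^ p * (ζ x ^ 2 + ‖fderiv ℝ ζ x‖ ^ 2)) := by
  have hF := h.nonneg x
  have hp0 : 0 ≤ p - 2 := by linarith
  have hsplit : F x ^ p = F x ^ (p - 2) * F x ^ 2 := by
    rw [← Real.rpow_two, ← Real.rpow_add_of_nonneg hF hp0 zero_le_two, sub_add_cancel]
  have hsplit1 : F x ^ (p - 1) = F x ^ (p - 2) * F x := by
    nth_rewrite 3 [← Real.rpow_one (F x)]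
    rw [← Real.rpow_add_of_nonneg hF hp0 zero_le_one]
    ring_nf
  have hD : HasFDerivAt (fun y ↦ F y ^ p * ζ y ^ 2)
      (F x ^ p • (2 * ζ x) • fderiv ℝ ζ x + ζ x ^ 2 • (p * F x ^ (p - 1)) • fderiv ℝ F x) x := by
    have hdF := (h.contDiff.differentiable one_ne_zero x).hasFDerivAt.rpow_const (p := p)
      (Or.inr (by linarith))
    simpa using hdF.fun_mul ((hζ.differentiable one_ne_zero x).hasFDerivAt.pow 2)
  have := Real.rpow_nonneg hF (p - 2)
  have := Real.rpow_nonneg hF p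
  rw [hD.fderiv]
  set a := ‖fderiv ℝ F x‖
  set d := ‖fderiv ℝ ζ x‖
  calc ‖_‖ ≤ F x ^ p * (2 * |ζ x| * d) + ζ x ^ 2 * (p * F x ^ (p - 1) * a) := by
        refine (norm_add_le _ _).trans_eq ?_
        have : 0 ≤ p := by linarith
        simp [norm_smul, abs_of_nonneg, Real.rpow_nonneg, hF, this, a, d]
    _ = F x ^ p * (2 * |ζ x| * d) + p / 2 * ζ x ^ 2 * F x ^ (p - 2) * (2 * F x * a) := by
        rw [hsplit1]; ring
    _ ≤ F x ^ p * (|ζ x| ^ 2 + d ^ 2) + p / 2 * ζ x ^ 2 * F x ^ (p - 2) * (F x ^ 2 + a ^ 2) := by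
        gcongr <;> exact two_mul_le_add_sq _ _
    _ = p / 2 * (ζ x ^ 2 * (F x ^ (p - 2) * a ^ 2)) + (p / 2) * (F x ^ p * ζ x ^ 2) +
          F x ^ p * (ζ x ^ 2 + d ^ 2) := by rw [sq_abs, hsplit]; ring
    _ ≤ _ := by
        have : 0 ≤ p / 2 * (F x ^ p * d ^ 2) := by positivity
        linarith

variable [BorelSpace E]

theorem integral_norm_fderiv_rpow_mul_sq_le [IsFiniteMeasureOnCompacts μ]
    (h : HasPowerEnergyBound μ Q F) (hQ : 0 ≤ Q) {p : ℝ} (hp : 2 ≤ p) {ζ : E → ℝ}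
    (hζ : ContDiff ℝ 1 ζ) (hζc : HasCompactSupport ζ) :
    ∫ x, ‖fderiv ℝ (fun y ↦ F y ^ p * ζ y ^ 2) x‖ ∂μ ≤
      p * (Q + 1) * ∫ x, F x ^ p * (ζ x ^ 2 + ‖fderiv ℝ ζ x‖ ^ 2) ∂μ := by
  have hFp {q : ℝ} (hq : 0 ≤ q) : Continuous fun x ↦ F x ^ q :=
    h.contDiff.continuous.rpow_const fun _ ↦ Or.inr hq
  have hFp0 := hFp (by linarith : 0 ≤ p)
  have hFp2 := hFp (by linarith : 0 ≤ p - 2)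
  have hcF : Continuous (fderiv ℝ F) := h.contDiff.continuous_fderiv one_ne_zero
  have hcζ : Continuous (fderiv ℝ ζ) := hζ.continuous_fderiv one_ne_zero
  have hcut : HasCompactSupport fun x ↦ ζ x ^ 2 + ‖fderiv ℝ ζ x‖ ^ 2 :=
    (hζc.comp_left (g := fun t : ℝ ↦ t ^ 2) (by simp)).add
      ((hζc.fderiv ℝ).norm.comp_left (g := fun t : ℝ ↦ t ^ 2) (by simp))
  have hΨ : Integrable (fun x ↦ fderiv ℝ (fun y ↦ F y ^ p * ζ y ^ 2) x) μ :=
    (((h.contDiff_rpow (by linarith)).mul (hζ.pow 2)).continuous_fderiv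
      one_ne_zero).integrable_of_hasCompactSupport
      ((hζc.comp_left (g := fun t : ℝ ↦ t ^ 2) (by simp)).mul_left.fderiv ℝ)
  have hA := integrable_sq_mul_of_hasCompactSupport (μ := μ) hζ.continuous hζc
    (f := fun x ↦ F x ^ (p - 2) * ‖fderiv ℝ F x‖ ^ 2) (by fun_prop)
  have hD : Integrable (fun x ↦ F x ^ p * ‖fderiv ℝ ζ x‖ ^ 2) μ := by
    simpa only [mul_comm] using
      integrable_sq_mul_of_hasCompactSupport (μ := μ) hcζ.norm (hζc.fderiv ℝ).norm hFp0
  have hT : Integrable (fun x ↦ F x ^ p * (ζ x ^ 2 + ‖fderiv ℝ ζ x‖ ^ 2)) μ :=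
    (hFp0.mul (by have := hζ.continuous; fun_prop)).integrable_of_hasCompactSupport hcut.mul_left
  set T := ∫ x, F x ^ p * (ζ x ^ 2 + ‖fderiv ℝ ζ x‖ ^ 2) ∂μ
  have hpow (x : E) : 0 ≤ F x ^ p := Real.rpow_nonneg (h.nonneg x) p
  have hDT : ∫ x, F x ^ p * ‖fderiv ℝ ζ x‖ ^ 2 ∂μ ≤ T := integral_mono hD hT fun x ↦
    mul_le_mul_of_nonneg_left (le_add_of_nonneg_left (sq_nonneg _)) (hpow x)
  have hT0 : 0 ≤ T := integral_nonneg fun x ↦ mul_nonneg (hpow x) (by positivity)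
  calc ∫ x, ‖fderiv ℝ (fun y ↦ F y ^ p * ζ y ^ 2) x‖ ∂μ
      ≤ p / 2 * (∫ x, ζ x ^ 2 * (F x ^ (p - 2) * ‖fderiv ℝ F x‖ ^ 2) ∂μ) + (p / 2 + 1) * T := by
        rw [← integral_const_mul, ← integral_const_mul,
          ← integral_add (hA.const_mul _) (hT.const_mul _)]
        exact integral_mono hΨ.norm ((hA.const_mul _).add (hT.const_mul _))
          (h.norm_fderiv_rpow_mul_sq_le hp hζ)
    _ ≤ p / 2 * (Q * T) + (p / 2 + 1) * T := by
        gcongr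
        exact (h.energy_le p hp ζ hζ hζc).trans (by gcongr)
    _ ≤ p * (Q + 1) * T := by
        have : 0 ≤ Q * p * T := by positivity
        nlinarith

end HasPowerEnergyBound

end Moser

theorem rpow_sq_add_norm_fderiv_rpow_sq_le {E : Type*} [NormedAddCommGroup E] [NormedSpace ℝ E]
    {η : E → ℝ} {x : E} {L m : ℝ} (hη : DifferentiableAt ℝ η x) (h0 : 0 ≤ η x) (h1 : η x ≤ 1)
    (hL : ‖fderiv ℝ η x‖ ≤ L) (hm : 0 ≤ m) :
    (η x ^ ((m + 2) / 2)) ^ 2 + ‖fderiv ℝ (fun y ↦ η y ^ ((m + 2) / 2)) x‖ ^ 2 ≤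
      (1 + ((m + 2) / 2 * L) ^ 2) * η x ^ m := by
  have hpow (r : ℝ) : (η x ^ r) ^ 2 = η x ^ (r * 2) := by
    rw [← Real.rpow_natCast, ← Real.rpow_mul h0, Nat.cast_ofNat]
  have hD : ‖fderiv ℝ (fun y ↦ η y ^ ((m + 2) / 2)) x‖ =
      (m + 2) / 2 * η x ^ (m / 2) * ‖fderiv ℝ η x‖ := by
    rw [(hη.hasFDerivAt.rpow_const (Or.inr (by linarith))).fderiv, norm_smul,
      Real.norm_of_nonneg (mul_nonneg (by linarith) (Real.rpow_nonneg h0 _))]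
    ring_nf
  calc (η x ^ ((m + 2) / 2)) ^ 2 + ‖fderiv ℝ (fun y ↦ η y ^ ((m + 2) / 2)) x‖ ^ 2
      = η x ^ (m + 2) + ((m + 2) / 2 * ‖fderiv ℝ η x‖) ^ 2 * η x ^ m := by
        rw [hD, hpow, mul_right_comm, mul_pow _ (η x ^ _), hpow, div_mul_cancel₀ _ two_ne_zero,
          div_mul_cancel₀ _ two_ne_zero]
    _ ≤ η x ^ m + ((m + 2) / 2 * L) ^ 2 * η x ^ m := by
        have := Real.rpow_le_rpow_of_exponent_ge' h0 h1 hm (by linarith : m ≤ m + 2)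
        gcongr ?_ + (_ * ?_) ^ 2 * _
    _ = _ := by ring

theorem exists_one_le_mul_le_rpow {χ A : ℝ} (hχ : 1 < χ) (hA : 0 ≤ A) :
    ∃ c : ℝ, 1 ≤ c ∧ c * A ≤ c ^ χ := by
  have hc : 1 ≤ max 1 (A ^ (χ - 1)⁻¹) := le_max_left _ _
  set c := max 1 (A ^ (χ - 1)⁻¹)
  have hAc : A ≤ c ^ (χ - 1) := by
    rw [← Real.rpow_inv_le_iff_of_pos hA (by positivity) (by linarith)]
    exact le_max_right _ _
  refine ⟨c, hc, ?_⟩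
  calc c * A ≤ c * c ^ (χ - 1) := by gcongr
    _ = c ^ χ := by rw [← Real.rpow_one_add' (by positivity) (by linarith), add_sub_cancel]

theorem exists_forall_le_rpow_of_succ_le_rpow {χ B Θ I : ℝ} (hχ : 1 < χ) (hB : 0 ≤ B)
    (hΘ : 1 ≤ Θ) (hI : 0 ≤ I) :
    ∃ K : ℝ, 0 ≤ K ∧ ∀ a : ℕ → ℝ, (∀ k, 0 ≤ a k) → a 0 ≤ I →
      (∀ k, a (k + 1) ≤ (B * Θ ^ k * a k) ^ χ) → ∀ k, a k ≤ K ^ χ ^ k := by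
  have hχ0 : 0 < χ := by linarith
  have hΘ0 : 0 < Θ := by linarith
  set τ : ℝ := Θ ^ (χ / (χ - 1))
  have hτ : 1 ≤ τ := Real.one_le_rpow hΘ (div_nonneg hχ0.le (by linarith))
  have hτχ : τ ^ χ = τ * Θ ^ χ := by
    rw [← Real.rpow_mul hΘ0.le, ← Real.rpow_add hΘ0]
    congr 1
    field_simp [(sub_pos.2 hχ).ne']
    ring
  obtain ⟨c, hc, hcχ⟩ := exists_one_le_mul_le_rpow hχ (by positivity : 0 ≤ τ * B ^ χ)
  refine ⟨c * I, by positivity, fun a ha ha0 hstep k ↦ ?_⟩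
  -- The weights `c * τ ^ k` are chosen so that `b k = c * τ ^ k * a k` has `b (k + 1) ≤ b k ^ χ`.
  have hmain : c * τ ^ k * a k ≤ (c * I) ^ χ ^ k := by
    induction k with
    | zero => simpa using mul_le_mul_of_nonneg_left ha0 (by positivity : 0 ≤ c)
    | succ k ih =>
      have hak := ha k
      calc c * τ ^ (k + 1) * a (k + 1) ≤ c * τ ^ (k + 1) * (B * Θ ^ k * a k) ^ χ := by
            gcongr
            exact hstep k
        _ = c * (τ * B ^ χ) * ((τ * Θ ^ χ) ^ k * a k ^ χ) := by
            rw [Real.mul_rpow (by positivity) hak, Real.mul_rpow hB (by positivity),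
              ← Real.rpow_pow_comm hΘ0.le]
            ring
        _ ≤ c ^ χ * ((τ * Θ ^ χ) ^ k * a k ^ χ) := by gcongr
        _ = (c * τ ^ k * a k) ^ χ := by
            rw [Real.mul_rpow (by positivity) hak, Real.mul_rpow (by positivity) (by positivity),
              ← Real.rpow_pow_comm (by positivity), hτχ]
            ring
        _ ≤ ((c * I) ^ χ ^ k) ^ χ := by gcongr
        _ = (c * I) ^ χ ^ (k + 1) := by rw [← Real.rpow_mul (by positivity), pow_succ]
  exact (le_mul_of_one_le_left (ha k) (one_le_mul_of_one_le_of_one_le hc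
    (one_le_pow₀ hτ))).trans hmain

theorem le_of_setIntegral_rpow_le_rpow {X : Type*} [TopologicalSpace X] [MeasurableSpace X]
    [OpensMeasurableSpace X] {μ : Measure X} [μ.IsOpenPosMeasure] {O : Set X} (hO : IsOpen O)
    {F : X → ℝ} (hF : Continuous F) (hF0 : ∀ x, 0 ≤ F x) {K : ℝ} (hK : 0 ≤ K) {p : ℕ → ℝ}
    (hp0 : ∀ k, 0 ≤ p k) (hp : Tendsto p atTop atTop) (hOμ : μ O ≠ ∞)
    (hint : ∀ k, IntegrableOn (fun x ↦ F x ^ p k) O μ)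
    (hle : ∀ k, ∫ x in O, F x ^ p k ∂μ ≤ K ^ p k) : ∀ x ∈ O, F x ≤ K := by
  intro x hx
  by_contra! hKx
  obtain ⟨M, hKM, hMx⟩ := exists_between hKx
  have hM : 0 < M := hK.trans_lt hKM
  set U := O ∩ {y | M < F y}
  have hUo : IsOpen U := hO.inter (isOpen_lt continuous_const hF)
  have hUμ : μ U ≠ ∞ := measure_ne_top_of_subset inter_subset_left hOμ
  have hU : 0 < μ.real U := ENNReal.toReal_pos (hUo.measure_pos μ ⟨x, hx, hMx⟩).ne' hUμ
  have hbound (k : ℕ) : μ.real U ≤ (K / M) ^ p k := by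
    rw [Real.div_rpow hK hM.le, le_div_iff₀ (by positivity)]
    calc μ.real U * M ^ p k = ∫ _ in U, M ^ p k ∂μ := by rw [setIntegral_const, smul_eq_mul]
      _ ≤ ∫ y in U, F y ^ p k ∂μ :=
        setIntegral_mono_on (integrableOn_const hUμ) ((hint k).mono_set inter_subset_left)
          hUo.measurableSet fun y hy ↦ Real.rpow_le_rpow hM.le hy.2.le (hp0 k)
      _ ≤ ∫ y in O, F y ^ p k ∂μ :=
        setIntegral_mono_set (hint k) (.of_forall fun y ↦ Real.rpow_nonneg (hF0 y) _)
          (inter_subset_left.eventuallyLE)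
      _ ≤ K ^ p k := hle k
  have hlim : Tendsto (fun k ↦ (K / M) ^ p k) atTop (𝓝 0) :=
    (tendsto_rpow_atTop_of_base_lt_one _ (by linarith [div_nonneg hK hM.le])
      ((div_lt_one hM).2 hKM)).comp hp
  exact hU.not_ge (ge_of_tendsto' hlim hbound)

theorem norm_rpow_mul_rpow_rpow {a b : ℝ} (ha : 0 ≤ a) (hb : 0 ≤ b) (p m χ : ℝ) :
    ‖a ^ p * b ^ m‖ ^ χ = a ^ (p * χ) * b ^ (m * χ) := by
  have hap := Real.rpow_nonneg ha p
  have hbm := Real.rpow_nonneg hb m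
  rw [Real.norm_of_nonneg (mul_nonneg hap hbm), Real.mul_rpow hap hbm, ← Real.rpow_mul ha,
    ← Real.rpow_mul hb]

theorem integrable_rpow_mul_rpow_of_hasCompactSupport {X : Type*} [TopologicalSpace X]
    [MeasurableSpace X] [OpensMeasurableSpace X] {μ : Measure X} [IsFiniteMeasureOnCompacts μ]
    {F η : X → ℝ} (hF : Continuous F) (hη : Continuous η) (hηc : HasCompactSupport η) {p m : ℝ}
    (hp : 0 ≤ p) (hm : 0 < m) : Integrable (fun x ↦ F x ^ p * η x ^ m) μ :=
  ((hF.rpow_const fun _ ↦ Or.inr hp).mul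
    (hη.rpow_const fun _ ↦ Or.inr hm.le)).integrable_of_hasCompactSupport
    (hηc.comp_left (g := fun t : ℝ ↦ t ^ m) (Real.zero_rpow hm.ne')).mul_left

/-- The quantity iterated in Moser's method: the `p`-th power integral of `F` with a cutoff `η`.
With `n = finrank ℝ E`, the power of the cutoff is the affine function `m p` of `p` such that
`m 2 = 2` and `χ * (m p + 2) = m (χ * p)` for the Sobolev exponent `χ = n / (n - 1)`. -/
noncomputable def moserIntegral {E : Type*} [NormedAddCommGroup E] [NormedSpace ℝ E]
    [MeasurableSpace E] (μ : Measure E) (η F : E → ℝ) (p : ℝ) : ℝ :=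
  ∫ x, F x ^ p * η x ^ ((finrank ℝ E + 1) * p - 2 * finrank ℝ E) ∂μ

section MoserIteration

variable {E : Type*} [NormedAddCommGroup E] [NormedSpace ℝ E] [MeasurableSpace E] [BorelSpace E]
  {μ : Measure E} {Q : ℝ} {η : E → ℝ}

namespace HasPowerEnergyBound

theorem integral_norm_fderiv_rpow_mul_rpow_le [IsFiniteMeasureOnCompacts μ] {F : E → ℝ}
    (h : HasPowerEnergyBound μ Q F) (hQ : 0 ≤ Q) {p m L : ℝ} (hp : 2 ≤ p) (hm : 0 < m)
    (hη : ContDiff ℝ 1 η) (hηc : HasCompactSupport η) (hη0 : ∀ x, 0 ≤ η x) (hη1 : ∀ x, η x ≤ 1)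
    (hL : ∀ x, ‖fderiv ℝ η x‖ ≤ L) :
    ∫ x, ‖fderiv ℝ (fun y ↦ F y ^ p * η y ^ (m + 2)) x‖ ∂μ ≤
      p * (Q + 1) * ((1 + ((m + 2) / 2 * L) ^ 2) * ∫ x, F x ^ p * η x ^ m ∂μ) := by
  have hζ : ContDiff ℝ 1 fun x ↦ η x ^ ((m + 2) / 2) :=
    hη.rpow_const_of_le (by rw [Nat.cast_one]; linarith)
  have hζc : HasCompactSupport fun x ↦ η x ^ ((m + 2) / 2) :=
    hηc.comp_left (g := fun t : ℝ ↦ t ^ ((m + 2) / 2)) (Real.zero_rpow (by linarith))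
  have hζsq (x : E) : (η x ^ ((m + 2) / 2)) ^ 2 = η x ^ (m + 2) := by
    rw [← Real.rpow_mul_natCast (hη0 x), Nat.cast_ofNat, div_mul_cancel₀ _ two_ne_zero]
  have hFp (x : E) : 0 ≤ F x ^ p := Real.rpow_nonneg (h.nonneg x) p
  have hbound := h.integral_norm_fderiv_rpow_mul_sq_le hQ hp hζ hζc
  simp only [hζsq] at hbound
  refine hbound.trans (mul_le_mul_of_nonneg_left ?_ (by nlinarith))
  rw [← integral_const_mul]
  refine integral_mono_of_nonneg (.of_forall fun x ↦ ?_)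
    ((integrable_rpow_mul_rpow_of_hasCompactSupport h.contDiff.continuous hη.continuous hηc
      (by linarith) hm).const_mul _) (.of_forall fun x ↦ ?_)
  · have := Real.rpow_nonneg (hη0 x) (m + 2)
    have := hFp x
    positivity
  · have := rpow_sq_add_norm_fderiv_rpow_sq_le (hη.differentiable one_ne_zero x) (hη0 x) (hη1 x)
      (hL x) hm.le
    rw [hζsq] at this
    exact (mul_le_mul_of_nonneg_left this (hFp x)).trans_eq (by ring)

variable [FiniteDimensional ℝ E] [μ.IsAddHaarMeasure]

theorem exists_moserIntegral_mul_le {χ : ℝ} (hχ : (finrank ℝ E : ℝ).HolderConjugate χ)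
    (hQ : 0 ≤ Q) (hη : ContDiff ℝ 1 η) (hηc : HasCompactSupport η) (hη0 : ∀ x, 0 ≤ η x)
    (hη1 : ∀ x, η x ≤ 1) :
    ∃ B : ℝ, 0 ≤ B ∧ ∀ F : E → ℝ, HasPowerEnergyBound μ Q F → ∀ p : ℝ, 2 ≤ p →
      moserIntegral μ η F (χ * p) ≤ (B * p ^ 3 * moserIntegral μ η F p) ^ χ := by
  obtain ⟨L, hL⟩ : ∃ L : ℝ, ∀ x, ‖fderiv ℝ η x‖ ≤ L :=
    (hηc.fderiv ℝ).exists_bound_of_continuous (hη.continuous_fderiv one_ne_zero)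
  have hL0 : 0 ≤ L := (norm_nonneg _).trans (hL 0)
  obtain ⟨S, hS, hSob⟩ := exists_integral_norm_rpow_le_rpow_integral_norm_fderiv μ ℝ hχ
  unfold moserIntegral
  set n := (finrank ℝ E : ℝ)
  have hn : 1 < n := hχ.lt
  refine ⟨S * ((Q + 1) * (1 + ((n + 1) * L) ^ 2)), by positivity, fun F h p hp ↦ ?_⟩
  set m : ℝ := (n + 1) * p - 2 * n with hm
  have hm0 : 0 < m := by nlinarith
  have hmχ : (m + 2) * χ = (n + 1) * (χ * p) - 2 * n := by
    rw [hm, hχ.conjugate_eq]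
    field_simp [(sub_pos.2 hn).ne']
    ring
  have hφ : 0 ≤ ∫ x, F x ^ p * η x ^ m ∂μ := integral_nonneg fun x ↦
    mul_nonneg (Real.rpow_nonneg (h.nonneg x) _) (Real.rpow_nonneg (hη0 x) _)
  have hcoef : p * (Q + 1) * (1 + ((m + 2) / 2 * L) ^ 2) ≤
      (Q + 1) * (1 + ((n + 1) * L) ^ 2) * p ^ 3 :=
    calc p * (Q + 1) * (1 + ((m + 2) / 2 * L) ^ 2)
        ≤ p * (Q + 1) * (p ^ 2 + ((n + 1) * p * L) ^ 2) := by
          have hmp : (m + 2) / 2 ≤ (n + 1) * p := by nlinarith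
          gcongr
          nlinarith
      _ = _ := by ring
  calc ∫ x, F x ^ (χ * p) * η x ^ ((n + 1) * (χ * p) - 2 * n) ∂μ
      = ∫ x, ‖F x ^ p * η x ^ (m + 2)‖ ^ χ ∂μ := by
        simp only [norm_rpow_mul_rpow_rpow (h.nonneg _) (hη0 _), hmχ, mul_comm p χ]
    _ ≤ (S * ∫ x, ‖fderiv ℝ (fun y ↦ F y ^ p * η y ^ (m + 2)) x‖ ∂μ) ^ χ :=
        hSob _ ((h.contDiff_rpow (by linarith)).mul
          (hη.rpow_const_of_le (by rw [Nat.cast_one]; linarith)))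
          (hηc.comp_left (g := fun t : ℝ ↦ t ^ (m + 2)) (Real.zero_rpow (by linarith))).mul_left
    _ ≤ (S * ((Q + 1) * (1 + ((n + 1) * L) ^ 2) * p ^ 3 * ∫ x, F x ^ p * η x ^ m ∂μ)) ^ χ := by
        have := h.integral_norm_fderiv_rpow_mul_rpow_le hQ hp hm0 hη hηc hη0 hη1 hL
        rw [← mul_assoc] at this
        have hχ0 := hχ.symm.nonneg
        gcongr
        exact this.trans (by gcongr)
    _ = _ := by ring_nf

theorem exists_moserIntegral_le_rpow {χ : ℝ} (hχ : (finrank ℝ E : ℝ).HolderConjugate χ)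
    (hQ : 0 ≤ Q) (hη : ContDiff ℝ 1 η) (hηc : HasCompactSupport η) (hη0 : ∀ x, 0 ≤ η x)
    (hη1 : ∀ x, η x ≤ 1) {I : ℝ} (hI : 0 ≤ I) :
    ∃ K : ℝ, 0 ≤ K ∧ ∀ F : E → ℝ, HasPowerEnergyBound μ Q F → ∫ x, η x ^ 2 * F x ^ 2 ∂μ ≤ I →
      ∀ k : ℕ, moserIntegral μ η F (2 * χ ^ k) ≤ K ^ (2 * χ ^ k) := by
  have hχ1 : 1 < χ := hχ.symm.lt
  obtain ⟨B, hB, hstep⟩ := exists_moserIntegral_mul_le (μ := μ) hχ hQ hη hηc hη0 hη1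
  obtain ⟨K, hK, hiter⟩ := exists_forall_le_rpow_of_succ_le_rpow hχ1 (by positivity : 0 ≤ B * 8)
    (one_le_pow₀ hχ1.le : 1 ≤ χ ^ 3) hI
  refine ⟨√K, K.sqrt_nonneg, fun F h hFI k ↦ ?_⟩
  rw [Real.rpow_mul K.sqrt_nonneg, Real.rpow_two, Real.sq_sqrt hK]
  refine hiter (fun k ↦ moserIntegral μ η F (2 * χ ^ k)) (fun k ↦ integral_nonneg fun x ↦ ?_)
    ?_ (fun k ↦ ?_) k
  · exact mul_nonneg (Real.rpow_nonneg (h.nonneg x) _) (Real.rpow_nonneg (hη0 x) _)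
  · refine le_of_eq_of_le (integral_congr_ae (.of_forall fun x ↦ ?_)) hFI
    ring_nf
    norm_cast
    ring
  · convert hstep F h _ (by linarith [one_le_pow₀ hχ1.le (n := k)] : 2 ≤ 2 * χ ^ k) using 2 <;> ring

theorem exists_forall_le_of_integral_sq_le (hE : 2 ≤ finrank ℝ E) (hQ : 0 ≤ Q)
    (hη : ContDiff ℝ 1 η) (hηc : HasCompactSupport η) (hη0 : ∀ x, 0 ≤ η x)
    (hη1 : ∀ x, η x ≤ 1) {O : Set E} (hO : IsOpen O) (hηO : ∀ x ∈ O, η x = 1) {I : ℝ}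
    (hI : 0 ≤ I) :
    ∃ K : ℝ, ∀ F : E → ℝ, HasPowerEnergyBound μ Q F → ∫ x, η x ^ 2 * F x ^ 2 ∂μ ≤ I →
      ∀ x ∈ O, F x ≤ K := by
  have hn : (1 : ℝ) < finrank ℝ E := by exact_mod_cast hE
  set n := (finrank ℝ E : ℝ)
  set χ : ℝ := n.conjExponent
  have hχ : n.HolderConjugate χ := .conjExponent hn
  obtain ⟨K, hK, hφ⟩ := exists_moserIntegral_le_rpow (μ := μ) hχ hQ hη hηc hη0 hη1 hI
  refine ⟨K, fun F h hFI ↦ ?_⟩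
  have hp (k : ℕ) : 2 ≤ 2 * χ ^ k := by linarith [one_le_pow₀ hχ.symm.lt.le (n := k)]
  have hcut (k : ℕ) : EqOn (fun x ↦ F x ^ (2 * χ ^ k) * η x ^ ((n + 1) * (2 * χ ^ k) - 2 * n))
      (fun x ↦ F x ^ (2 * χ ^ k)) O := fun x hx ↦ by
    simp only [hηO x hx, Real.one_rpow, mul_one]
  have hint (k : ℕ) :
      Integrable (fun x ↦ F x ^ (2 * χ ^ k) * η x ^ ((n + 1) * (2 * χ ^ k) - 2 * n)) μ :=
    integrable_rpow_mul_rpow_of_hasCompactSupport h.contDiff.continuous hη.continuous hηc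
      (by linarith [hp k]) (by nlinarith [hp k])
  refine le_of_setIntegral_rpow_le_rpow (μ := μ) hO h.contDiff.continuous h.nonneg hK
    (p := fun k ↦ 2 * χ ^ k) (fun k ↦ by linarith [hp k])
    ((tendsto_pow_atTop_atTop_of_one_lt hχ.symm.lt).const_mul_atTop two_pos)
    (measure_ne_top_of_subset (fun x hx ↦ subset_tsupport η ?_) hηc.measure_lt_top.ne)
    (fun k ↦ (hint k).integrableOn.congr_fun (hcut k) hO.measurableSet) fun k ↦ ?_
  · simp [hηO x hx]
  · calc ∫ x in O, F x ^ (2 * χ ^ k) ∂μ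
        = ∫ x in O, F x ^ (2 * χ ^ k) * η x ^ ((n + 1) * (2 * χ ^ k) - 2 * n) ∂μ :=
          (setIntegral_congr_fun hO.measurableSet (hcut k)).symm
      _ ≤ moserIntegral μ η F (2 * χ ^ k) := setIntegral_le_integral (hint k) <| .of_forall
          fun x ↦ mul_nonneg (Real.rpow_nonneg (h.nonneg x) _) (Real.rpow_nonneg (hη0 x) _)
      _ ≤ K ^ (2 * χ ^ k) := hφ F h hFI k

end HasPowerEnergyBound

end MoserIteration

/-! ### Weak Harnack inequality and Liouville theorem -/

theorem measure_le_two_mul_inter_or {X : Type*} [MeasurableSpace X] (μ : Measure X) {s A B : Set X}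
    (h : s ⊆ A ∪ B) : μ s ≤ 2 * μ (s ∩ A) ∨ μ s ≤ 2 * μ (s ∩ B) := by
  have hadd : μ s ≤ μ (s ∩ A) + μ (s ∩ B) :=
    calc μ s = μ (s ∩ A ∪ s ∩ B) := by rw [← inter_union_distrib_left, inter_eq_left.2 h]
      _ ≤ μ (s ∩ A) + μ (s ∩ B) := measure_union_le _ _
  rcases le_total (μ (s ∩ A)) (μ (s ∩ B)) with hAB | hBA
  · exact Or.inr (hadd.trans (by rw [two_mul]; gcongr))
  · exact Or.inl (hadd.trans (by rw [two_mul]; gcongr))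

theorem setLIntegral_enorm_rpow_le_of_convex {E G : Type*} [NormedAddCommGroup E]
    [NormedSpace ℝ E] [FiniteDimensional ℝ E] [MeasurableSpace E] [BorelSpace E]
    [NormedAddCommGroup G] [NormedSpace ℝ G] (μ : Measure E) [μ.IsAddHaarMeasure]
    {F : E → G} (hF : ContDiff ℝ 1 F) {p : ℝ} (hp : 1 ≤ p) {s A : Set E} (hs : MeasurableSet s)
    (hconv : Convex ℝ s) (hsμ : μ s ≠ ∞) (hA : MeasurableSet A) (hhalf : μ s ≤ 2 * μ (s ∩ A))
    {c : ℝ≥0∞} (hc : ∀ y ∈ A, ‖F y‖ₑ ≤ c) :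
    ∫⁻ x in s, ‖F x‖ₑ ^ p ∂μ ≤ 2 ^ p *
      (ediam s ^ p * (2 ^ finrank ℝ E * ∫⁻ x in s, ‖fderiv ℝ F x‖ₑ ^ p ∂μ) + c ^ p * μ s) := by
  rcases eq_or_ne (μ s) 0 with hs0 | hs0
  · simp [Measure.restrict_eq_zero.2 hs0]
  have hAs : μ.restrict s A = μ (s ∩ A) := by rw [Measure.restrict_apply hA, inter_comm]
  have hbound := measure_mul_lintegral_enorm_rpow_le (μ.restrict s) hp hA hc
  rw [hAs, Measure.restrict_apply_univ] at hbound
  refine (ENNReal.mul_le_mul_iff_right hs0 hsμ).1 ?_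
  calc μ s * ∫⁻ x in s, ‖F x‖ₑ ^ p ∂μ ≤ 2 * (μ (s ∩ A) * ∫⁻ x in s, ‖F x‖ₑ ^ p ∂μ) := by
        rw [← mul_assoc]; gcongr
    _ ≤ 2 * (2 ^ (p - 1) * (ediam s ^ p *
          (2 ^ finrank ℝ E * μ s * ∫⁻ x in s, ‖fderiv ℝ F x‖ₑ ^ p ∂μ) + c ^ p * μ s * μ s)) := by
        grw [hbound, lintegral_lintegral_enorm_sub_rpow_le_of_convex μ hF hp hs hconv,
          measure_mono inter_subset_left]
    _ = 2 * 2 ^ (p - 1) * (μ s * (ediam s ^ p *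
          (2 ^ finrank ℝ E * ∫⁻ x in s, ‖fderiv ℝ F x‖ₑ ^ p ∂μ) + c ^ p * μ s)) := by ring
    _ = _ := by
        nth_rewrite 1 [← ENNReal.rpow_one 2]
        rw [← ENNReal.rpow_add _ _ two_ne_zero (by finiteness), add_sub_cancel]
        ring

namespace IsEllipticFlux

variable {E : Type*} [NormedAddCommGroup E] [NormedSpace ℝ E] [MeasurableSpace E] [BorelSpace E]
  {μ : Measure E} {lam Lam : ℝ}

theorem setLIntegral_enorm_fderiv_log_rpow_two_le [IsFiniteMeasureOnCompacts μ] {w : E → ℝ}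
    {V : E → E} (h : IsEllipticFlux μ lam Lam w V) (hlam : 0 < lam) (hw : ∀ x, 0 < w x)
    {ζ : E → ℝ} (hζ : ContDiff ℝ 1 ζ) (hζc : HasCompactSupport ζ) {s : Set E}
    (hs : MeasurableSet s) (hζs : ∀ x ∈ s, ζ x = 1) :
    ∫⁻ x in s, ‖fderiv ℝ (fun y ↦ Real.log (w y)) x‖ₑ ^ (2 : ℝ) ∂μ ≤
      ENNReal.ofReal ((2 * Lam / lam) ^ 2 * ∫ x, ‖fderiv ℝ ζ x‖ ^ 2 ∂μ) := by
  have hlog : ContDiff ℝ 1 fun x ↦ Real.log (w x) := h.contDiff.log fun x ↦ (hw x).ne'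
  have hlog' : Continuous (fderiv ℝ fun x ↦ Real.log (w x)) := hlog.continuous_fderiv one_ne_zero
  refine le_trans ?_
    (ENNReal.ofReal_le_ofReal (h.integral_sq_mul_norm_fderiv_log_sq_le hlam hw hζ hζc))
  rw [ofReal_integral_eq_lintegral_ofReal
    (integrable_sq_mul_of_hasCompactSupport hζ.continuous hζc (by fun_prop))
    (.of_forall fun x ↦ by positivity)]
  calc ∫⁻ x in s, ‖fderiv ℝ (fun y ↦ Real.log (w y)) x‖ₑ ^ (2 : ℝ) ∂μ
      = ∫⁻ x in s, ENNReal.ofReal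
          (ζ x ^ 2 * ‖fderiv ℝ (fun y ↦ Real.log (w y)) x‖ ^ 2) ∂μ := by
        refine setLIntegral_congr_fun hs fun x hx ↦ ?_
        simp only [hζs x hx, one_pow, one_mul, ENNReal.ofReal_pow (norm_nonneg _), ofReal_norm,
          ENNReal.rpow_two]
    _ ≤ _ := setLIntegral_le_lintegral _ _

variable [FiniteDimensional ℝ E]

theorem exists_setLIntegral_enorm_log_rpow_two_le (μ : Measure E) [μ.IsAddHaarMeasure]
    (hlam : 0 < lam) (Lam : ℝ) {r : ℝ} (hr : 0 < r) :
    ∃ I : ℝ≥0∞, I ≠ ∞ ∧ ∀ (w : E → ℝ) (V : E → E), IsEllipticFlux μ lam Lam w V →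
      (∀ x, 0 < w x) → (∀ x, w x ≤ 1) →
      μ (ball 0 r) ≤ 2 * μ (ball 0 r ∩ {x | 1 / 2 ≤ w x}) →
      ∫⁻ x in ball 0 r, ‖Real.log (w x)‖ₑ ^ (2 : ℝ) ∂μ ≤ I := by
  let ζ : ContDiffBump (0 : E) := ⟨r, r + 1, hr, by linarith⟩
  have hdiam : ediam (ball (0 : E) r) ≠ ∞ := isBounded_ball.ediam_ne_top
  have hvol : μ (ball 0 r) ≠ ∞ := measure_ball_lt_top.ne
  refine ⟨2 ^ (2 : ℝ) * (ediam (ball (0 : E) r) ^ (2 : ℝ) * (2 ^ finrank ℝ E *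
    ENNReal.ofReal ((2 * Lam / lam) ^ 2 * ∫ x, ‖fderiv ℝ ζ x‖ ^ 2 ∂μ)) +
    1 ^ (2 : ℝ) * μ (ball 0 r)), by finiteness, fun w V h hw hw1 hhalf ↦ ?_⟩
  have hlog : ∀ x ∈ {x | 1 / 2 ≤ w x}, ‖Real.log (w x)‖ₑ ≤ 1 := by
    intro x (hx : 1 / 2 ≤ w x)
    have hle := Real.one_sub_inv_le_log_of_pos (hw x)
    have hinv : (w x)⁻¹ ≤ 2 := by rw [inv_le_comm₀ (hw x) two_pos]; linarith
    rw [Real.enorm_eq_ofReal_abs, ENNReal.ofReal_le_one, abs_le]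
    exact ⟨by linarith, (Real.log_nonpos (hw x).le (hw1 x)).trans zero_le_one⟩
  have hgrad := h.setLIntegral_enorm_fderiv_log_rpow_two_le hlam hw ζ.contDiff
    ζ.hasCompactSupport measurableSet_ball fun x hx ↦
      ζ.one_of_mem_closedBall (ball_subset_closedBall hx)
  grw [setLIntegral_enorm_rpow_le_of_convex μ (h.contDiff.log fun x ↦ (hw x).ne') one_le_two
    measurableSet_ball (convex_ball 0 r) hvol
    (measurableSet_le measurable_const h.contDiff.continuous.measurable) hhalf hlog, hgrad]

theorem exists_pos_forall_le_of_pos (μ : Measure E) [μ.IsAddHaarMeasure] (hE : 2 ≤ finrank ℝ E)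
    (hlam : 0 < lam) (Lam : ℝ) :
    ∃ c : ℝ, 0 < c ∧ ∀ (w : E → ℝ) (V : E → E), IsEllipticFlux μ lam Lam w V →
      (∀ x, 0 < w x) → (∀ x, w x ≤ 1) →
      μ (ball 0 2) ≤ 2 * μ (ball 0 2 ∩ {x | 1 / 2 ≤ w x}) → ∀ x ∈ ball 0 1, c ≤ w x := by
  obtain ⟨I, hI, hlog⟩ := exists_setLIntegral_enorm_log_rpow_two_le μ hlam Lam two_pos
  let η : ContDiffBump (0 : E) := ⟨1, 2, one_pos, one_lt_two⟩
  obtain ⟨K, hK⟩ := HasPowerEnergyBound.exists_forall_le_of_integral_sq_le (μ := μ) hE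
    (sq_nonneg (2 * Lam / lam)) η.contDiff η.hasCompactSupport (fun _ ↦ η.nonneg)
    (fun _ ↦ η.le_one) isOpen_ball
    (fun x hx ↦ η.one_of_mem_closedBall (ball_subset_closedBall hx)) I.toReal_nonneg
  refine ⟨Real.exp (-K), Real.exp_pos _, fun w V h hw hw1 hhalf x hx ↦ ?_⟩
  have hF := h.hasPowerEnergyBound_neg_log hlam hw hw1
  rw [← Real.le_log_iff_exp_le (hw x), neg_le]
  refine hK _ hF ?_ x hx
  have hint : Integrable (fun x ↦ η x ^ 2 * (-Real.log (w x)) ^ 2) μ :=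
    integrable_sq_mul_of_hasCompactSupport η.continuous η.hasCompactSupport
      (hF.contDiff.continuous.pow 2)
  rw [integral_eq_lintegral_of_nonneg_ae (.of_forall fun x ↦ by positivity) hint.1]
  refine ENNReal.toReal_mono hI (le_trans ?_ (hlog w V h hw hw1 hhalf))
  rw [← lintegral_indicator measurableSet_ball]
  refine lintegral_mono fun y ↦ ?_
  by_cases hy : y ∈ ball (0 : E) 2
  · rw [indicator_of_mem hy, Real.enorm_eq_ofReal_abs, ENNReal.rpow_two,
      ← ENNReal.ofReal_pow (abs_nonneg _), sq_abs, neg_sq]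
    exact ENNReal.ofReal_le_ofReal
      (mul_le_of_le_one_left (sq_nonneg _) (pow_le_one₀ η.nonneg η.le_one))
  · have hη : η y = 0 := η.zero_of_le_dist (not_lt.1 hy)
    simp [hη]

theorem exists_pos_forall_le (μ : Measure E) [μ.IsAddHaarMeasure] (hE : 2 ≤ finrank ℝ E)
    (hlam : 0 < lam) (Lam : ℝ) :
    ∃ c : ℝ, 0 < c ∧ ∀ (w : E → ℝ) (V : E → E), IsEllipticFlux μ lam Lam w V →
      (∀ x, 0 ≤ w x) → (∀ x, w x ≤ 1) →
      μ (ball 0 2) ≤ 2 * μ (ball 0 2 ∩ {x | 1 / 2 ≤ w x}) → ∀ x ∈ ball 0 1, c ≤ w x := by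
  obtain ⟨c, hc, hpos⟩ := exists_pos_forall_le_of_pos μ hE hlam Lam
  refine ⟨c, hc, fun w V h hw hw1 hhalf x hx ↦ ?_⟩
  have hε : ∀ᶠ ε : ℝ in 𝓝[>] 0, c ≤ (1 - ε) * w x + ε := by
    filter_upwards [Ioo_mem_nhdsGT one_pos] with ε ⟨hε0, hε1⟩
    have hmul (y : E) : 0 ≤ (1 - ε) * w y := mul_nonneg (by linarith) (hw y)
    refine hpos _ _ (h.const_mul_add_const (1 - ε) ε) (fun y ↦ by linarith [hmul y])
      (fun y ↦ by nlinarith [hw1 y]) (hhalf.trans ?_) x hx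
    gcongr 2 * μ (_ ∩ ?_)
    intro y (hy : 1 / 2 ≤ w y)
    change 1 / 2 ≤ (1 - ε) * w y + ε
    nlinarith [hw1 y]
  refine ge_of_tendsto ?_ hε
  have : Continuous fun ε : ℝ ↦ (1 - ε) * w x + ε := by fun_prop
  simpa using (this.tendsto 0).mono_left nhdsWithin_le_nhds

end IsEllipticFlux

namespace IsEllipticFlux

variable {E : Type*} [NormedAddCommGroup E] [NormedSpace ℝ E] [MeasurableSpace E]
  [BorelSpace E] {μ : Measure E} {lam Lam : ℝ} {w : E → ℝ} {V : E → E}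

theorem comp_fst {G : Type*} [NormedAddCommGroup G] [NormedSpace ℝ G] [MeasurableSpace G]
    [BorelSpace G] [SecondCountableTopology G] (ν : Measure G) [SFinite ν]
    [IsFiniteMeasureOnCompacts ν] [SFinite μ] [IsFiniteMeasureOnCompacts μ]
    (h : IsEllipticFlux μ lam Lam w V) :
    IsEllipticFlux (μ.prod ν) lam Lam (fun z : E × G ↦ w z.1) (fun z ↦ (V z.1, 0)) := by
  have hD (z : E × G) : fderiv ℝ (fun z : E × G ↦ w z.1) z =
      (fderiv ℝ w z.1).comp (.fst ℝ E G) :=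
    ((h.contDiff.differentiable one_ne_zero z.1).hasFDerivAt.comp z hasFDerivAt_fst).fderiv
  have hnorm (L : E →L[ℝ] ℝ) : ‖L.comp (.fst ℝ E G)‖ = ‖L‖ :=
    le_antisymm (ContinuousLinearMap.opNorm_le_bound _ (norm_nonneg L) fun z ↦
        (L.le_opNorm z.1).trans (by gcongr; exact norm_fst_le z))
      (ContinuousLinearMap.opNorm_le_bound _ (norm_nonneg _) fun v ↦ by
        simpa using (L.comp (.fst ℝ E G)).le_opNorm (v, 0))
  have hV := h.continuous_flux
  refine ⟨h.contDiff.comp contDiff_fst, by fun_prop, fun z ↦ ?_, fun z ↦ ?_, fun φ hφ hφc ↦ ?_⟩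
  · simpa only [hD, hnorm, ContinuousLinearMap.comp_apply, ContinuousLinearMap.coe_fst'] using
      h.coercive z.1
  · simpa only [hD, hnorm, Prod.norm_mk, norm_zero, max_eq_left (norm_nonneg _)] using
      h.norm_flux_le z.1
  · have hslice (y : G) (x : E) :
        fderiv ℝ φ (x, y) (V x, 0) = fderiv ℝ (fun x ↦ φ (x, y)) x (V x) := by
      have hφx := (hφ.differentiable one_ne_zero (x, y)).hasFDerivAt
      have hD := (hφx.comp (f := fun x ↦ (x, y)) x (hasFDerivAt_prodMk_left x y)).fderiv
      exact (DFunLike.congr_fun hD (V x)).symm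
    have hint : Integrable (fun z : E × G ↦ fderiv ℝ φ z (V z.1, 0)) (μ.prod ν) :=
      ((hφ.continuous_fderiv one_ne_zero).clm_apply
        (by fun_prop)).integrable_of_hasCompactSupport
        ((hφc.fderiv ℝ).mono fun z hz h0 ↦ hz (by simp [h0]))
    rw [integral_prod_symm _ hint]
    refine integral_eq_zero_of_ae (.of_forall fun y ↦ ?_)
    simp only [hslice]
    refine h.integral_fderiv_flux _ (hφ.comp (contDiff_prodMk_left y))
      (.intro (hφc.isCompact.image continuous_fst) fun x hx ↦ ?_)
    exact image_eq_zero_of_notMem_tsupport fun hxy ↦ hx ⟨(x, y), hxy, rfl⟩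

variable [FiniteDimensional ℝ E]

theorem exists_pos_forall_le_or_forall_le_one_sub (μ : Measure E) [μ.IsAddHaarMeasure]
    (hE : 2 ≤ finrank ℝ E) (hlam : 0 < lam) (Lam : ℝ) :
    ∃ c : ℝ, 0 < c ∧ ∀ (w : E → ℝ) (V : E → E), IsEllipticFlux μ lam Lam w V →
      (∀ x, 0 ≤ w x) → (∀ x, w x ≤ 1) → (∀ x, c ≤ w x) ∨ ∀ x, w x ≤ 1 - c := by
  obtain ⟨c, hc, hball⟩ := exists_pos_forall_le μ hE hlam Lam
  have hscale {w : E → ℝ} {V : E → E} (h : IsEllipticFlux μ lam Lam w V) (h0 : ∀ x, 0 ≤ w x)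
      (h1 : ∀ x, w x ≤ 1) (hhalf : ∃ᶠ R : ℝ in atTop,
        μ (ball 0 2) ≤ 2 * μ (ball 0 2 ∩ {x | 1 / 2 ≤ w (R • x)})) (x : E) : c ≤ w x := by
    obtain ⟨R, hR, hxR⟩ := (hhalf.and_eventually (eventually_gt_atTop ‖x‖)).exists
    have hR0 : 0 < R := (norm_nonneg x).trans_lt hxR
    have hmem : R⁻¹ • x ∈ ball (0 : E) 1 := by
      rwa [mem_ball_zero_iff, norm_smul, norm_inv, Real.norm_of_nonneg hR0.le,
        inv_mul_lt_iff₀ hR0, mul_one]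
    simpa only [smul_inv_smul₀ hR0.ne'] using
      hball _ _ (h.comp_smul hR0.ne') (fun _ ↦ h0 _) (fun _ ↦ h1 _) hR _ hmem
  refine ⟨c, hc, fun w V h h0 h1 ↦ ?_⟩
  have hhalf (R : ℝ) : μ (ball 0 2) ≤ 2 * μ (ball 0 2 ∩ {x | 1 / 2 ≤ w (R • x)}) ∨
      μ (ball 0 2) ≤ 2 * μ (ball 0 2 ∩ {x | 1 / 2 ≤ -1 * w (R • x) + 1}) :=
    measure_le_two_mul_inter_or μ fun x _ ↦ by
      rcases le_total (1 / 2) (w (R • x)) with hx | hx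
      · exact Or.inl hx
      · exact Or.inr (by change 1 / 2 ≤ -1 * w (R • x) + 1; linarith)
  rcases frequently_or_distrib.1 (Eventually.frequently (f := atTop) (.of_forall hhalf)) with
    hw | hw
  · exact Or.inl (hscale h h0 h1 hw)
  · have hsub := hscale (h.const_mul_add_const (-1) 1) (fun x ↦ by linarith [h1 x])
      (fun x ↦ by linarith [h0 x]) hw
    exact Or.inr fun x ↦ by linarith [hsub x]

variable [μ.IsAddHaarMeasure]

theorem apply_eq_apply_of_two_le_finrank (h : IsEllipticFlux μ lam Lam w V) (hlam : 0 < lam)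
    (hE : 2 ≤ finrank ℝ E) {M : ℝ} (hM : ∀ x, |w x| ≤ M) (x y : E) : w x = w y := by
  obtain ⟨c, hc, hosc⟩ := exists_pos_forall_le_or_forall_le_one_sub μ hE hlam Lam
  have hle (x : E) : w x ≤ ⨆ x, w x :=
    le_ciSup ⟨M, forall_mem_range.2 fun x ↦ (abs_le.1 (hM x)).2⟩ x
  have hge (x : E) : ⨅ x, w x ≤ w x :=
    ciInf_le ⟨-M, forall_mem_range.2 fun x ↦ (abs_le.1 (hM x)).1⟩ x
  set s := ⨆ x, w x
  set i := ⨅ x, w x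
  suffices his : s ≤ i by linarith [hle x, hge x, hle y, hge y]
  by_contra! his
  have hd : 0 < s - i := sub_pos.2 his
  have hv (x : E) : (s - i)⁻¹ * w x + -(i / (s - i)) = (w x - i) / (s - i) := by ring
  rcases hosc _ _ (h.const_mul_add_const (s - i)⁻¹ (-(i / (s - i))))
      (fun x ↦ by rw [hv]; exact div_nonneg (sub_nonneg.2 (hge x)) hd.le)
      (fun x ↦ by rw [hv, div_le_one hd]; linarith [hle x]) with hlow | hup
  · have : i + c * (s - i) ≤ i := le_ciInf fun x ↦ by
      have := hlow x
      rw [hv, le_div_iff₀ hd] at this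
      linarith
    linarith [mul_pos hc hd]
  · have : s ≤ s - c * (s - i) := ciSup_le fun x ↦ by
      have := hup x
      rw [hv, div_le_iff₀ hd] at this
      linarith
    linarith [mul_pos hc hd]

-- Dummy variables reduce the case of dimension at most one to that of higher dimension.
theorem apply_eq_apply_of_bounded (h : IsEllipticFlux μ lam Lam w V) (hlam : 0 < lam) {M : ℝ}
    (hM : ∀ x, |w x| ≤ M) (x y : E) : w x = w y := by
  have hdim : 2 ≤ finrank ℝ (E × (ℝ × ℝ)) := by
    rw [finrank_prod, finrank_prod, finrank_self]
    lia
  exact (h.comp_fst (volume : Measure (ℝ × ℝ))).apply_eq_apply_of_two_le_finrank hlam hdim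
    (fun z ↦ hM z.1) (x, 0) (y, 0)

end IsEllipticFlux

/-! ### Quasilinear equations in divergence form -/

section QuasilinearEquation

variable {E : Type*} [NormedAddCommGroup E] [NormedSpace ℝ E] [MeasurableSpace E]
  [BorelSpace E] {μ : Measure E} [μ.IsAddHaarMeasure]
  {A : (E →L[ℝ] ℝ) → E} {u : E → ℝ} {lam M : ℝ} {K : ℝ≥0}

theorem isEllipticFlux_comp_add_right_sub (hu : ContDiff ℝ 1 u) (hM : ∀ x, ‖fderiv ℝ u x‖ ≤ M)
    (hmono : ∀ p q : E →L[ℝ] ℝ, ‖p‖ ≤ M → ‖q‖ ≤ M → lam * ‖p - q‖ ^ 2 ≤ (p - q) (A p - A q))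
    (hlip : LipschitzOnWith K A (closedBall 0 M))
    (hweak : ∀ φ : E → ℝ, ContDiff ℝ 1 φ → HasCompactSupport φ →
      ∫ x, fderiv ℝ φ x (A (fderiv ℝ u x)) ∂μ = 0) (v : E) :
    IsEllipticFlux μ lam K (fun x ↦ u (x + v) - u x)
      (fun x ↦ A (fderiv ℝ u (x + v)) - A (fderiv ℝ u x)) := by
  have hmem (x : E) : fderiv ℝ u x ∈ closedBall 0 M := mem_closedBall_zero_iff.2 (hM x)
  have hA : Continuous fun x ↦ A (fderiv ℝ u x) :=
    hlip.continuousOn.comp_continuous (hu.continuous_fderiv one_ne_zero) hmem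
  have hAv : Continuous fun x ↦ A (fderiv ℝ u (x + v)) := hA.comp (continuous_add_const v)
  have hD (x : E) : fderiv ℝ (fun x ↦ u (x + v) - u x) x =
      fderiv ℝ u (x + v) - fderiv ℝ u x := by
    have huv : DifferentiableAt ℝ (fun x ↦ u (x + v)) x :=
      (hu.differentiable one_ne_zero).comp (by fun_prop) x
    rw [fderiv_fun_sub huv (hu.differentiable one_ne_zero x), fderiv_comp_add_right]
  refine ⟨by fun_prop, hAv.sub hA, fun x ↦ ?_, fun x ↦ ?_, fun φ hφ hφc ↦ ?_⟩
  · rw [hD]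
    exact hmono _ _ (hM _) (hM _)
  · rw [hD]
    exact hlip.norm_sub_le (hmem _) (hmem _)
  · have hint {X : E → E} (hX : Continuous X) : Integrable (fun x ↦ fderiv ℝ φ x (X x)) μ :=
      ((hφ.continuous_fderiv one_ne_zero).clm_apply hX).integrable_of_hasCompactSupport
        ((hφc.fderiv ℝ).mono fun x hx h0 ↦ hx (by simp [h0]))
    have hshift := hweak (fun x ↦ φ (x + -v)) (by fun_prop)
      (hφc.comp_homeomorph (Homeomorph.addRight (-v)))
    rw [← integral_add_right_eq_self _ v] at hshift
    simp only [fderiv_comp_add_right, add_neg_cancel_right] at hshift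
    simp only [map_sub]
    rw [integral_sub (hint hAv) (hint hA), hshift, hweak φ hφ hφc, sub_zero]

variable [FiniteDimensional ℝ E]

theorem eq_fderiv_add_of_forall_integral_fderiv_eq_zero (hlam : 0 < lam) (hu : ContDiff ℝ 1 u)
    (hM : ∀ x, ‖fderiv ℝ u x‖ ≤ M)
    (hmono : ∀ p q : E →L[ℝ] ℝ, ‖p‖ ≤ M → ‖q‖ ≤ M → lam * ‖p - q‖ ^ 2 ≤ (p - q) (A p - A q))
    (hlip : LipschitzOnWith K A (closedBall 0 M))
    (hweak : ∀ φ : E → ℝ, ContDiff ℝ 1 φ → HasCompactSupport φ →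
      ∫ x, fderiv ℝ φ x (A (fderiv ℝ u x)) ∂μ = 0) (x : E) :
    u x = fderiv ℝ u 0 x + u 0 := by
  have hdiff := hu.differentiable one_ne_zero
  have hbdd (v x : E) : |u (x + v) - u x| ≤ M * ‖v‖ := by
    simpa only [Real.norm_eq_abs, add_sub_cancel_left] using
      convex_univ.norm_image_sub_le_of_norm_fderiv_le (𝕜 := ℝ) (fun x _ ↦ hdiff x)
        (fun x _ ↦ hM x) (mem_univ x) (mem_univ (x + v))
  have hdifference (v x : E) : u (x + v) - u x = u (0 + v) - u 0 :=
    (isEllipticFlux_comp_add_right_sub hu hM hmono hlip hweak v).apply_eq_apply_of_bounded hlam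
      (hbdd v) x 0
  have hconst (v : E) : fderiv ℝ u v = fderiv ℝ u 0 := by
    have htranslate : (fun x ↦ u (x + v)) = fun x ↦ u x + (u (0 + v) - u 0) :=
      funext fun x ↦ by linarith [hdifference v x]
    rw [← zero_add v, ← fderiv_comp_add_right, htranslate, fderiv_add_const]
  have hzero (y : E) : fderiv ℝ (fun x ↦ u x - fderiv ℝ u 0 x) y = 0 := by
    rw [fderiv_fun_sub (hdiff y) (fderiv ℝ u 0).differentiableAt, ContinuousLinearMap.fderiv,
      hconst, sub_self]
  have := is_const_of_fderiv_eq_zero (𝕜 := ℝ) (hdiff.fun_sub (fderiv ℝ u 0).differentiable)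
    hzero x 0
  rw [map_zero] at this
  linarith

end QuasilinearEquation

/-! ### The minimal surface equation -/

section AreaElement

variable {F : Type*} [SeminormedAddCommGroup F]

/-- The area element `√(1 + |p|²)` of a graph with gradient `p`. -/
noncomputable def areaElement (p : F) : ℝ := √(1 + ‖p‖ ^ 2)

theorem areaElement_sq (p : F) : areaElement p ^ 2 = 1 + ‖p‖ ^ 2 :=
  Real.sq_sqrt (by positivity)

theorem one_le_areaElement (p : F) : 1 ≤ areaElement p :=
  Real.one_le_sqrt.2 (by linarith [sq_nonneg ‖p‖])

theorem areaElement_pos (p : F) : 0 < areaElement p :=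
  zero_lt_one.trans_le (one_le_areaElement p)

end AreaElement

section MinimalFlux

variable {F : Type*} [NormedAddCommGroup F] [InnerProductSpace ℝ F]

/-- The flux `p / √(1 + |p|²)` of the minimal surface equation `div (Du / √(1 + |Du|²)) = 0`. -/
noncomputable def minimalFlux (p : F) : F := (areaElement p)⁻¹ • p

theorem one_add_inner_le_areaElement_mul (p q : F) :
    1 + ⟪p, q⟫ ≤ areaElement p * areaElement q := by
  rw [areaElement, areaElement, ← Real.sqrt_mul (by positivity)]
  refine (add_le_add_right (real_inner_le_norm p q) 1).trans (Real.le_sqrt_of_sq_le ?_)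
  linarith [sq_nonneg (‖p‖ - ‖q‖)]

theorem norm_sub_sq_le_areaElement_mul (p q : F) :
    ‖p - q‖ ^ 2 ≤ 2 * (areaElement p * areaElement q) *
      (areaElement p * areaElement q - 1 - ⟪p, q⟫) := by
  have hcs : ⟪p, q⟫ ^ 2 ≤ (‖p‖ * ‖q‖) ^ 2 :=
    sq_le_sq' (neg_le_of_abs_le (abs_real_inner_le_norm p q)) (real_inner_le_norm p q)
  have hPQ : (areaElement p * areaElement q) ^ 2 = (1 + ‖p‖ ^ 2) * (1 + ‖q‖ ^ 2) := by
    rw [mul_pow, areaElement_sq, areaElement_sq]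
  rw [norm_sub_sq_real]
  linarith [sq_nonneg (areaElement p * areaElement q - (1 + ⟪p, q⟫))]

theorem inner_sub_minimalFlux_sub (p q : F) :
    ⟪p - q, minimalFlux p - minimalFlux q⟫ = ((areaElement p)⁻¹ + (areaElement q)⁻¹) *
      (areaElement p * areaElement q - 1 - ⟪p, q⟫) := by
  have hP0 := (areaElement_pos p).ne'
  have hQ0 := (areaElement_pos q).ne'
  simp only [minimalFlux, inner_sub_left, inner_sub_right, inner_smul_right,
    real_inner_self_eq_norm_sq, real_inner_comm p q, eq_sub_of_add_eq' (areaElement_sq _).symm]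
  field_simp
  ring

theorem norm_minimalFlux_sub_sq (p q : F) :
    ‖minimalFlux p - minimalFlux q‖ ^ 2 =
      2 * ((areaElement p)⁻¹ * (areaElement q)⁻¹) *
        (areaElement p * areaElement q - 1 - ⟪p, q⟫) -
      ((areaElement p)⁻¹ - (areaElement q)⁻¹) ^ 2 := by
  have hP0 := (areaElement_pos p).ne'
  have hQ0 := (areaElement_pos q).ne'
  rw [norm_sub_sq_real]
  simp only [minimalFlux, norm_smul, mul_pow, norm_inv, inv_pow, Real.norm_eq_abs, sq_abs,
    real_inner_smul_left, real_inner_smul_right]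
  rw [eq_sub_of_add_eq' (areaElement_sq p).symm, eq_sub_of_add_eq' (areaElement_sq q).symm]
  field_simp
  ring

theorem norm_minimalFlux_sub_sq_le_inner (p q : F) :
    ‖minimalFlux p - minimalFlux q‖ ^ 2 ≤ ⟪p - q, minimalFlux p - minimalFlux q⟫ := by
  rw [inner_sub_minimalFlux_sub, norm_minimalFlux_sub_sq]
  have hP0 := inv_pos.2 (areaElement_pos p)
  have hQ0 := inv_pos.2 (areaElement_pos q)
  have hP := mul_le_of_le_one_right hP0.le (inv_le_one_of_one_le₀ (one_le_areaElement q))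
  have hQ := mul_le_of_le_one_left hQ0.le (inv_le_one_of_one_le₀ (one_le_areaElement p))
  refine (sub_le_self _ (sq_nonneg _)).trans
    (mul_le_mul_of_nonneg_right (by linarith) ?_)
  linarith [one_add_inner_le_areaElement_mul p q]

theorem lipschitzWith_minimalFlux : LipschitzWith 1 (minimalFlux : F → F) :=
  .of_dist_le_mul fun p q ↦ by
    rw [NNReal.coe_one, one_mul, dist_eq_norm, dist_eq_norm]
    rcases (norm_nonneg (minimalFlux p - minimalFlux q)).eq_or_lt with h0 | hpos
    · exact h0 ▸ norm_nonneg _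
    · refine le_of_mul_le_mul_right ?_ hpos
      rw [← sq]
      exact (norm_minimalFlux_sub_sq_le_inner p q).trans (real_inner_le_norm _ _)

theorem mul_norm_sub_sq_le_inner_sub_minimalFlux_sub {M : ℝ} {p q : F} (hp : ‖p‖ ≤ M)
    (hq : ‖q‖ ≤ M) :
    (areaElement M ^ 3)⁻¹ * ‖p - q‖ ^ 2 ≤ ⟪p - q, minimalFlux p - minimalFlux q⟫ := by
  have hmono {r : F} (hr : ‖r‖ ≤ M) : areaElement r ≤ areaElement M :=
    Real.sqrt_le_sqrt (by gcongr; exact hr.trans (Real.le_norm_self M))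
  have hpM := hmono hp
  have hqM := hmono hq
  have hP0 := areaElement_pos p
  have hQ0 := areaElement_pos q
  have hM0 := areaElement_pos M
  have hdefect : 0 ≤ areaElement p * areaElement q - 1 - ⟪p, q⟫ := by
    linarith [one_add_inner_le_areaElement_mul p q]
  rw [inner_sub_minimalFlux_sub]
  calc (areaElement M ^ 3)⁻¹ * ‖p - q‖ ^ 2
      ≤ (areaElement M ^ 3)⁻¹ * (2 * (areaElement M * areaElement M) *
          (areaElement p * areaElement q - 1 - ⟪p, q⟫)) := by
        gcongr
        exact (norm_sub_sq_le_areaElement_mul p q).trans (by gcongr)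
    _ = ((areaElement M)⁻¹ + (areaElement M)⁻¹) *
          (areaElement p * areaElement q - 1 - ⟪p, q⟫) := by
        field_simp
        ring
    _ ≤ ((areaElement p)⁻¹ + (areaElement q)⁻¹) *
          (areaElement p * areaElement q - 1 - ⟪p, q⟫) := by gcongr

theorem contDiff_minimalFlux {n : WithTop ℕ∞} : ContDiff ℝ n (minimalFlux : F → F) :=
  have harea : ContDiff ℝ n (areaElement : F → ℝ) :=
    (contDiff_const.add (contDiff_norm_sq ℝ)).sqrt fun p ↦ by positivity
  (harea.inv fun p ↦ (areaElement_pos p).ne').smul contDiff_id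

theorem hasFDerivAt_areaElement (p : F) :
    HasFDerivAt areaElement ((areaElement p)⁻¹ • innerSL ℝ p) p := by
  refine (((hasStrictFDerivAt_norm_sq p).hasFDerivAt.const_add 1).sqrt
    (by positivity)).congr_fderiv ?_
  ext v
  simp only [areaElement, smul_apply, coe_innerSL_apply, nsmul_eq_mul, smul_eq_mul]
  ring

theorem hasFDerivAt_minimalFlux (p : F) :
    HasFDerivAt minimalFlux ((areaElement p)⁻¹ • ContinuousLinearMap.id ℝ F -
      (areaElement p ^ 3)⁻¹ • (innerSL ℝ p).smulRight p) p := by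
  have hinv := (hasDerivAt_inv (areaElement_pos p).ne').comp_hasFDerivAt p
    (hasFDerivAt_areaElement p)
  refine (hinv.smul (hasFDerivAt_id p)).congr_fderiv ?_
  ext v
  simp only [Function.comp_apply, id_eq, add_apply, sub_apply, smul_apply, neg_smul, neg_apply,
    ContinuousLinearMap.id_apply, ContinuousLinearMap.smulRight_apply, coe_innerSL_apply,
    smul_eq_mul]
  module

theorem trace_fderiv_minimalFlux_comp [FiniteDimensional ℝ F] {G : F → F} {x : F}
    (hG : DifferentiableAt ℝ G x) :
    LinearMap.trace ℝ F (fderiv ℝ (fun y ↦ minimalFlux (G y)) x) =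
      (areaElement (G x) ^ 3)⁻¹ * ((1 + ‖G x‖ ^ 2) * LinearMap.trace ℝ F (fderiv ℝ G x) -
        ⟪G x, fderiv ℝ G x (G x)⟫) := by
  have hW0 := (areaElement_pos (G x)).ne'
  have hD : fderiv ℝ (fun y ↦ minimalFlux (G y)) x = _ :=
    ((hasFDerivAt_minimalFlux (G x)).comp x hG.hasFDerivAt).fderiv
  have hlin : (fderiv ℝ (fun y ↦ minimalFlux (G y)) x : F →ₗ[ℝ] F) =
      (areaElement (G x))⁻¹ • (fderiv ℝ G x : F →ₗ[ℝ] F) - (areaElement (G x) ^ 3)⁻¹ •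
        ((innerSL ℝ (G x)).comp (fderiv ℝ G x) : F →ₗ[ℝ] ℝ).smulRight (G x) := by
    rw [hD]
    rfl
  rw [hlin, map_sub, map_smul, map_smul, LinearMap.trace_smulRight, ← areaElement_sq]
  simp only [smul_eq_mul, ContinuousLinearMap.toLinearMap_comp, LinearMap.comp_apply,
    ContinuousLinearMap.toLinearMap_innerSL_apply, coe_innerₛₗ_apply, ContinuousLinearMap.coe_coe]
  field_simp

end MinimalFlux

section IntegrationByParts

variable {E : Type*} [NormedAddCommGroup E] [NormedSpace ℝ E] [MeasurableSpace E]
  [BorelSpace E] {μ : Measure E}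

theorem integrable_mul_fderiv_apply [IsFiniteMeasureOnCompacts μ] {f φ : E → ℝ}
    (hf : Continuous f) (hφ : ContDiff ℝ 1 φ) (hφc : HasCompactSupport φ) (v : E) :
    Integrable (fun x ↦ f x * fderiv ℝ φ x v) μ :=
  (hf.mul ((hφ.continuous_fderiv one_ne_zero).clm_apply
    continuous_const)).integrable_of_hasCompactSupport (hφc.fderiv_apply ℝ v).mul_left

theorem integrable_fderiv_apply_mul [IsFiniteMeasureOnCompacts μ] {f φ : E → ℝ}
    (hf : ContDiff ℝ 1 f) (hφ : Continuous φ) (hφc : HasCompactSupport φ) (v : E) :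
    Integrable (fun x ↦ fderiv ℝ f x v * φ x) μ :=
  (((hf.continuous_fderiv one_ne_zero).clm_apply
    continuous_const).mul hφ).integrable_of_hasCompactSupport hφc.mul_left

variable [FiniteDimensional ℝ E] [μ.IsAddHaarMeasure]

theorem integral_fderiv_apply_eq_neg_integral_mul_trace {φ : E → ℝ} {X : E → E}
    (hφ : ContDiff ℝ 1 φ) (hφc : HasCompactSupport φ) (hX : ContDiff ℝ 1 X) :
    ∫ x, fderiv ℝ φ x (X x) ∂μ = -∫ x, φ x * LinearMap.trace ℝ E (fderiv ℝ X x) ∂μ := by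
  set b := finBasis ℝ E
  set c : Fin (finrank ℝ E) → E →L[ℝ] ℝ := fun i ↦ (b.coord i).toContinuousLinearMap
  have hc (i) : ContDiff ℝ 1 fun x ↦ c i (X x) := (c i).contDiff.comp hX
  have hD (i) (x) : fderiv ℝ (fun x ↦ c i (X x)) x (b i) = c i (fderiv ℝ X x (b i)) := by
    have hfd : fderiv ℝ (fun x ↦ c i (X x)) x = _ :=
      ((c i).hasFDerivAt.comp x (hX.differentiable one_ne_zero x).hasFDerivAt).fderiv
    rw [hfd, ContinuousLinearMap.comp_apply]
  have hflux (x) : fderiv ℝ φ x (X x) = ∑ i, c i (X x) * fderiv ℝ φ x (b i) := by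
    conv_lhs => rw [← b.sum_repr (X x), map_sum]
    simp only [map_smul, smul_eq_mul]
    rfl
  have hdiv (x) : φ x * LinearMap.trace ℝ E (fderiv ℝ X x) =
      ∑ i, fderiv ℝ (fun x ↦ c i (X x)) x (b i) * φ x := by
    rw [LinearMap.trace_eq_matrix_trace ℝ b, Matrix.trace, mul_comm, Finset.sum_mul]
    simp only [hD, Matrix.diag, LinearMap.toMatrix_apply]
    rfl
  have hint_flux (i) := integrable_mul_fderiv_apply (μ := μ) (hc i).continuous hφ hφc (b i)
  have hint_div (i) := integrable_fderiv_apply_mul (μ := μ) (hc i) hφ.continuous hφc (b i)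
  simp only [hflux, hdiv]
  rw [integral_finsetSum _ fun i _ ↦ hint_flux i, integral_finsetSum _ fun i _ ↦ hint_div i,
    ← Finset.sum_neg_distrib]
  exact Finset.sum_congr rfl fun i _ ↦ integral_mul_fderiv_eq_neg_fderiv_mul_of_integrable
    (hint_div i) (hint_flux i)
    (((hc i).continuous.mul hφ.continuous).integrable_of_hasCompactSupport hφc.mul_left)
    (fun x _ ↦ (hc i).differentiable one_ne_zero x) (fun x _ ↦ hφ.differentiable one_ne_zero x)

end IntegrationByParts

section Gradient

variable {F : Type*} [NormedAddCommGroup F] [InnerProductSpace ℝ F] [CompleteSpace F]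

theorem contDiff_gradient {u : F → ℝ} {m n : WithTop ℕ∞} (hu : ContDiff ℝ n u) (hmn : m + 1 ≤ n) :
    ContDiff ℝ m (gradient u) :=
  (InnerProductSpace.toDual ℝ F).symm.contDiff.comp (hu.fderiv_right hmn)

theorem inner_fderiv_gradient {u : F → ℝ} {x : F} (hu : DifferentiableAt ℝ (gradient u) x)
    (v w : F) : ⟪fderiv ℝ (gradient u) x v, w⟫ = fderiv ℝ (fun y ↦ fderiv ℝ u y w) x v := by
  have hD := fderiv_inner_apply ℝ hu (differentiableAt_const w) v
  simp only [inner_gradient_left, fderiv_fun_const, Pi.zero_apply, zero_apply, inner_zero_right,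
    zero_add] at hD
  exact hD.symm

end Gradient

section EuclideanSpace

variable {n : ℕ} {u : EuclideanSpace ℝ (Fin n) → ℝ}

theorem gradient_apply_eq_pd (x : EuclideanSpace ℝ (Fin n)) (j : Fin n) :
    gradient u x j = pd u x j := by
  rw [pd, ← inner_gradient_left, EuclideanSpace.inner_single_right, one_mul]
  rfl

theorem norm_gradient_sq_eq_sum_pd_sq (x : EuclideanSpace ℝ (Fin n)) :
    ‖gradient u x‖ ^ 2 = ∑ j, pd u x j ^ 2 := by
  simp only [EuclideanSpace.norm_sq_eq, gradient_apply_eq_pd, Real.norm_eq_abs, sq_abs]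

variable {x : EuclideanSpace ℝ (Fin n)}

theorem fderiv_gradient_single_apply_eq_pd2 (hu : DifferentiableAt ℝ (gradient u) x)
    (j k : Fin n) : fderiv ℝ (gradient u) x (EuclideanSpace.single k 1) j = pd2 u x j k := by
  rw [pd2, ← inner_fderiv_gradient hu, EuclideanSpace.inner_single_right, one_mul]
  rfl

theorem trace_fderiv_gradient_eq_sum_pd2 (hu : DifferentiableAt ℝ (gradient u) x) :
    LinearMap.trace ℝ (EuclideanSpace ℝ (Fin n)) (fderiv ℝ (gradient u) x) = ∑ j, pd2 u x j j := by
  rw [LinearMap.trace_eq_sum_inner _ (EuclideanSpace.basisFun (Fin n) ℝ)]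
  simp only [EuclideanSpace.basisFun_apply, ContinuousLinearMap.coe_coe,
    EuclideanSpace.inner_single_left, fderiv_gradient_single_apply_eq_pd2 hu, map_one, one_mul]

theorem inner_gradient_fderiv_gradient_eq_sum (hu : DifferentiableAt ℝ (gradient u) x) :
    ⟪gradient u x, fderiv ℝ (gradient u) x (gradient u x)⟫ =
      ∑ j, ∑ k, pd u x j * pd u x k * pd2 u x j k := by
  have hcoord (j : Fin n) : fderiv ℝ (gradient u) x (gradient u x) j =
      ∑ k, pd u x k * pd2 u x j k := by
    conv_lhs => rw [← (EuclideanSpace.basisFun (Fin n) ℝ).sum_repr (gradient u x)]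
    simp only [map_sum, map_smul, EuclideanSpace.basisFun_repr, EuclideanSpace.basisFun_apply,
      WithLp.ofLp_sum, WithLp.ofLp_smul, Finset.sum_apply, Pi.smul_apply, smul_eq_mul,
      gradient_apply_eq_pd, fderiv_gradient_single_apply_eq_pd2 hu]
  simp only [PiLp.inner_apply, hcoord, gradient_apply_eq_pd, RCLike.inner_apply, conj_trivial,
    Finset.sum_mul]
  exact Finset.sum_congr rfl fun j _ ↦ Finset.sum_congr rfl fun k _ ↦ by ring

end EuclideanSpace

section MinimalGraph

variable {F : Type*} [NormedAddCommGroup F] [InnerProductSpace ℝ F] [FiniteDimensional ℝ F]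
  {u : F → ℝ}

/-- The graph of `u` is a minimal surface: `u` is of class `C²` and solves the minimal surface
equation, in nondivergence form, with the trace of `D(∇u)` for `Δu`. -/
structure IsMinimalGraph (u : F → ℝ) : Prop where
  contDiff : ContDiff ℝ 2 u
  equation : ∀ x, (1 + ‖gradient u x‖ ^ 2) * LinearMap.trace ℝ F (fderiv ℝ (gradient u) x) -
    ⟪gradient u x, fderiv ℝ (gradient u) x (gradient u x)⟫ = 0

namespace IsMinimalGraph

theorem contDiff_gradient (h : IsMinimalGraph u) : ContDiff ℝ 1 (gradient u) :=
  _root_.contDiff_gradient h.contDiff one_add_one_eq_two.le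

theorem integral_fderiv_minimalFlux_gradient [MeasurableSpace F] [BorelSpace F] {μ : Measure F}
    [μ.IsAddHaarMeasure] (h : IsMinimalGraph u) {φ : F → ℝ} (hφ : ContDiff ℝ 1 φ)
    (hφc : HasCompactSupport φ) : ∫ x, fderiv ℝ φ x (minimalFlux (gradient u x)) ∂μ = 0 := by
  have hX : ContDiff ℝ 1 fun x ↦ minimalFlux (gradient u x) :=
    contDiff_minimalFlux.comp h.contDiff_gradient
  rw [integral_fderiv_apply_eq_neg_integral_mul_trace hφ hφc hX]
  simp only [trace_fderiv_minimalFlux_comp (h.contDiff_gradient.differentiable one_ne_zero _),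
    h.equation, mul_zero, integral_zero, neg_zero]

theorem eq_inner_gradient_add (h : IsMinimalGraph u) {M : ℝ} (hM : ∀ x, ‖gradient u x‖ ≤ M)
    (x : F) : u x = ⟪gradient u 0, x⟫ + u 0 := by
  borelize F
  set dual := InnerProductSpace.toDual ℝ F
  have hmono (p q : F →L[ℝ] ℝ) (hp : ‖p‖ ≤ M) (hq : ‖q‖ ≤ M) :
      (areaElement M ^ 3)⁻¹ * ‖p - q‖ ^ 2 ≤
        (p - q) (minimalFlux (dual.symm p) - minimalFlux (dual.symm q)) := by
    rw [← dual.symm.norm_map] at hp hq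
    rw [← dual.symm.norm_map, ← InnerProductSpace.toDual_symm_apply, map_sub]
    exact mul_norm_sub_sq_le_inner_sub_minimalFlux_sub hp hq
  have hlip : LipschitzWith (1 * 1) fun p ↦ minimalFlux (dual.symm p) :=
    lipschitzWith_minimalFlux.comp dual.symm.lipschitz
  rw [inner_gradient_left]
  exact eq_fderiv_add_of_forall_integral_fderiv_eq_zero (μ := volume)
    (inv_pos.2 (pow_pos (areaElement_pos M) 3)) (h.contDiff.of_le one_le_two)
    (fun x ↦ by rw [← dual.symm.norm_map]; exact hM x) hmono hlip.lipschitzOnWith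
    (fun φ hφ hφc ↦ h.integral_fderiv_minimalFlux_gradient hφ hφc) x

end IsMinimalGraph

end MinimalGraph

theorem isMinimalGraph_iff_forall_pd {n : ℕ} {u : EuclideanSpace ℝ (Fin n) → ℝ}
    (hu : ContDiff ℝ 2 u) :
    IsMinimalGraph u ↔ ∀ x, (1 + ∑ j, pd u x j ^ 2) * (∑ j, pd2 u x j j) -
      ∑ j, ∑ k, pd u x j * pd u x k * pd2 u x j k = 0 := by
  have hgrad := (contDiff_gradient hu one_add_one_eq_two.le).differentiable one_ne_zero
  refine ⟨fun h x ↦ ?_, fun h ↦ ⟨hu, fun x ↦ ?_⟩⟩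
  · simpa only [norm_gradient_sq_eq_sum_pd_sq, trace_fderiv_gradient_eq_sum_pd2 (hgrad x),
      inner_gradient_fderiv_gradient_eq_sum (hgrad x)] using h.equation x
  · simpa only [norm_gradient_sq_eq_sum_pd_sq, trace_fderiv_gradient_eq_sum_pd2 (hgrad x),
      inner_gradient_fderiv_gradient_eq_sum (hgrad x)] using h x

/-- **Moser's Bernstein-type theorem**: an entire `C²` solution of the minimal surface
equation `div(Du/√(1+|Du|²)) = 0` (equivalently
`(1+|Du|²)·Δu − Σ_{j,k} u_{x_j} u_{x_k} u_{x_j x_k} = 0`) over `ℝⁿ` with bounded gradient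
is affine linear. -/
theorem bernstein_minimal_surface_bounded_gradient (n : ℕ)
    (u : EuclideanSpace ℝ (Fin n) → ℝ) (hu : ContDiff ℝ 2 u)
    (hmse : ∀ x : EuclideanSpace ℝ (Fin n),
      (1 + ∑ j, pd u x j ^ 2) * (∑ j, pd2 u x j j)
        - ∑ j, ∑ k, pd u x j * pd u x k * pd2 u x j k = 0)
    (hbd : ∃ M : ℝ, ∀ x : EuclideanSpace ℝ (Fin n), ‖gradient u x‖ ≤ M) :
    ∃ (a : EuclideanSpace ℝ (Fin n)) (c : ℝ),
      ∀ x : EuclideanSpace ℝ (Fin n), u x = ⟪a, x⟫ + c := by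
  obtain ⟨M, hM⟩ := hbd
  have hgraph : IsMinimalGraph u := (isMinimalGraph_iff_forall_pd hu).2 hmse
  exact ⟨gradient u 0, u 0, hgraph.eq_inner_gradient_add hM⟩
end

section
/- Let k ≥ 1 and let f : ℝ² → ℝᵏ be a C² map satisfying the minimal surface system (1 + |f_y|²)·f_xx − 2·(f_x • f_y)·f_xy + (1 + |f_x|²)·f_yy = 0 at every point of ℝ², and suppose the total derivative Df is bounded on ℝ². Then f is affine linear, i.e. there exist a linear map A : ℝ² → ℝᵏ and b ∈ ℝᵏ with f(x) = A x + b for all x ∈ ℝ². -/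
open scoped RealInnerProductSpace

/-- Vector-valued partial derivative `f_x`. -/
noncomputable def fx {k : ℕ} (f : ℝ × ℝ → EuclideanSpace ℝ (Fin k)) (p : ℝ × ℝ) :
    EuclideanSpace ℝ (Fin k) := fderiv ℝ f p (1, 0)

/-- Vector-valued partial derivative `f_y`. -/
noncomputable def fy {k : ℕ} (f : ℝ × ℝ → EuclideanSpace ℝ (Fin k)) (p : ℝ × ℝ) :
    EuclideanSpace ℝ (Fin k) := fderiv ℝ f p (0, 1)

/-- Vector-valued second partial derivative `f_xx`. -/
noncomputable def fxx {k : ℕ} (f : ℝ × ℝ → EuclideanSpace ℝ (Fin k)) (p : ℝ × ℝ) :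
    EuclideanSpace ℝ (Fin k) := fderiv ℝ (fx f) p (1, 0)

/-- Vector-valued second partial derivative `f_xy`. -/
noncomputable def fxy {k : ℕ} (f : ℝ × ℝ → EuclideanSpace ℝ (Fin k)) (p : ℝ × ℝ) :
    EuclideanSpace ℝ (Fin k) := fderiv ℝ (fx f) p (0, 1)

/-- Vector-valued second partial derivative `f_yy`. -/
noncomputable def fyy {k : ℕ} (f : ℝ × ℝ → EuclideanSpace ℝ (Fin k)) (p : ℝ × ℝ) :
    EuclideanSpace ℝ (Fin k) := fderiv ℝ (fy f) p (0, 1)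

/-!
Let `g = 1 + Dfᵀ Df` be the metric induced on the graph and `M = g / √det g` its representative of
area element one. The minimal surface system makes the rows of `M` closed 1-forms, hence `M = DT`
for some `T : ℝ² → ℝ²`. Since `M` is positive definite, `T` is monotone, so Lewy's map `id + T`
does not decrease distances and is a diffeomorphism of the plane. Because `1 + M` intertwines the
complex structure `J = I ∘ M` of `g` with `I`, this map is a global isothermal coordinate.

A function `u` with bounded gradient for which `-du ∘ J` is exact is therefore the real part of an
entire function of this coordinate with bounded derivative, which is affine by Liouville's theorem.
Applied to the coordinates of the plane this shows that `M` is constant, and applied to the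
components of `f` that `Df` is constant.
-/

section Calculus

variable {E F G : Type*} [NormedAddCommGroup E] [NormedSpace ℝ E] [NormedAddCommGroup F]
  [NormedSpace ℝ F] [NormedAddCommGroup G] [NormedSpace ℝ G]

lemma fderiv_apply_const {ω : E → F →L[ℝ] G} {x : E} (hω : DifferentiableAt ℝ ω x) (v : E)
    (w : F) : fderiv ℝ (fun x ↦ ω x w) x v = fderiv ℝ ω x v w := by
  simp [fderiv_clm_apply hω (differentiableAt_const w)]

lemma hasFDerivAt_inv_sqrt_smul {Δ : E → ℝ} {N : E → F} {Δ' : E →L[ℝ] ℝ} {N' : E →L[ℝ] F} {x : E}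
    (hΔ : HasFDerivAt Δ Δ' x) (hN : HasFDerivAt N N' x) (hpos : 0 < Δ x) :
    HasFDerivAt (fun x ↦ (√(Δ x))⁻¹ • N x)
      ((√(Δ x) ^ 3)⁻¹ • (Δ x • N' - (2⁻¹ : ℝ) • Δ'.smulRight (N x))) x := by
  have hsqrt : 0 < √(Δ x) := Real.sqrt_pos.2 hpos
  have hinv := (hasDerivAt_inv hsqrt.ne').comp_hasFDerivAt x (hΔ.sqrt hpos.ne')
  refine (hinv.smul hN).congr_fderiv (ContinuousLinearMap.ext fun v ↦ ?_)
  have hsq : Δ x = √(Δ x) ^ 2 := (Real.sq_sqrt hpos.le).symm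
  simp only [Function.comp_apply, one_div, mul_inv_rev, neg_smul, add_apply, smul_apply,
    ContinuousLinearMap.smulRight_apply, neg_apply, smul_eq_mul, sub_apply]
  match_scalars <;> field_simp
  exact hsq.symm

lemma hasFDerivAt_fderiv_comp_continuousLinearEquiv (e : E ≃L[ℝ] F) {f : F → G} {x : E}
    (hf' : DifferentiableAt ℝ (fderiv ℝ f) (e x)) :
    HasFDerivAt (fderiv ℝ (f ∘ e))
      ((ContinuousLinearMap.compL ℝ E F G).flip e ∘L fderiv ℝ (fderiv ℝ f) (e x) ∘L
        (e : E →L[ℝ] F)) x := by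
  have hfderiv : fderiv ℝ (f ∘ e) =
      (ContinuousLinearMap.compL ℝ E F G).flip e ∘ fderiv ℝ f ∘ e :=
    funext fun x ↦ e.comp_right_fderiv
  rw [hfderiv]
  exact ((ContinuousLinearMap.compL ℝ E F G).flip e).hasFDerivAt.comp x
    (hf'.hasFDerivAt.comp x e.hasFDerivAt)

theorem exists_eq_add_of_fderiv_eq {f : E → F} (hf : Differentiable ℝ f)
    (hconst : ∀ x y, fderiv ℝ f x = fderiv ℝ f y) :
    ∃ (A : E →L[ℝ] F) (b : F), ∀ x, f x = A x + b := by
  let A : E →L[ℝ] F := fderiv ℝ f 0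
  refine ⟨A, f 0, congrFun (eq_of_fderiv_eq hf (A.differentiable.add_const _) (fun x ↦ ?_) 0 ?_)⟩
  · rw [fderiv_add_const, A.fderiv, hconst x 0]
  · simp

end Calculus

section MonotoneMaps

variable {E : Type*} [NormedAddCommGroup E] [InnerProductSpace ℝ E]

lemma norm_le_norm_add_of_inner_nonneg {x y : E} (h : 0 ≤ ⟪y, x⟫) : ‖x‖ ≤ ‖x + y‖ := by
  refine le_of_sq_le_sq ?_ (norm_nonneg _)
  rw [norm_add_sq_real, real_inner_comm]
  nlinarith [sq_nonneg ‖y‖]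

lemma antilipschitzWith_one_id_add {T : E → E} (hT : ∀ x y, 0 ≤ ⟪T x - T y, x - y⟫) :
    AntilipschitzWith 1 fun x ↦ x + T x :=
  AntilipschitzWith.of_le_mul_dist fun x y ↦ by
    simpa [dist_eq_norm, add_sub_add_comm] using norm_le_norm_add_of_inner_nonneg (hT x y)

lemma inner_sub_nonneg_of_hasFDerivAt {T : E → E} {T' : E → E →L[ℝ] E}
    (hT : ∀ x, HasFDerivAt T (T' x) x) (hT' : ∀ x v, 0 ≤ ⟪T' x v, v⟫) (x y : E) :
    0 ≤ ⟪T x - T y, x - y⟫ := by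
  have hline (t : ℝ) : HasDerivAt (fun t : ℝ ↦ y + t • (x - y)) (x - y) t := by
    simpa using ((hasDerivAt_id t).smul_const (x - y)).const_add y
  have hderiv (t : ℝ) : HasDerivAt (fun t : ℝ ↦ ⟪x - y, T (y + t • (x - y))⟫)
      ⟪x - y, T' (y + t • (x - y)) (x - y)⟫ t :=
    (innerSL ℝ (x - y)).hasFDerivAt.comp_hasDerivAt t ((hT _).comp_hasDerivAt t (hline t))
  have hmono := monotone_of_hasDerivAt_nonneg hderiv fun t ↦
    (hT' _ (x - y)).trans_eq (real_inner_comm _ _)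
  rw [real_inner_comm, inner_sub_right, sub_nonneg]
  simpa using hmono zero_le_one

lemma exists_continuousLinearEquiv_id_add [CompleteSpace E] {A : E →L[ℝ] E}
    (hA : ∀ v, 0 ≤ ⟪A v, v⟫) : ∃ e : E ≃L[ℝ] E, ∀ v, e v = v + A v := by
  have hunit : IsUnit (1 + A) :=
    ContinuousLinearMap.isUnit_of_forall_le_norm_inner_map _ one_pos fun v ↦ by
      simpa [inner_add_left] using (le_add_of_nonneg_right (hA v)).trans (le_abs_self _)
  obtain ⟨U, hU⟩ := hunit
  exact ⟨ContinuousLinearEquiv.unitsEquiv ℝ E U, fun v ↦ by simp [hU]⟩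

end MonotoneMaps

section GlobalInverse

open Filter Set
open scoped Uniformity

lemma isClosed_range_of_antilipschitzWith {X Y : Type*} [PseudoMetricSpace X] [CompleteSpace X]
    [MetricSpace Y] {f : X → Y} {K : NNReal} (hf : AntilipschitzWith K f) (hfc : Continuous f) :
    IsClosed (range f) := by
  refine isClosed_of_closure_subset fun y hy ↦ ?_
  obtain ⟨w, hw, hlim⟩ := mem_closure_iff_seq_limit.1 hy
  choose x hx using hw
  obtain rfl : f ∘ x = w := funext hx
  have hcauchy : CauchySeq x := by
    rw [cauchySeq_iff_tendsto]
    have hcomap : Tendsto (Prod.map f f ∘ Prod.map x x) atTop (𝓤 Y) :=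
      cauchySeq_iff_tendsto.1 hlim.cauchySeq
    exact (tendsto_comap_iff.2 hcomap).mono_right hf.comap_uniformity_le
  obtain ⟨a, ha⟩ := cauchySeq_tendsto_of_complete hcauchy
  exact ⟨a, tendsto_nhds_unique ((hfc.tendsto a).comp ha) hlim⟩

theorem exists_homeomorph_of_antilipschitzWith {E F : Type*} [NormedAddCommGroup E]
    [NormedSpace ℝ E] [CompleteSpace E] [NormedAddCommGroup F] [NormedSpace ℝ F] {f : E → F}
    {f' : E → E ≃L[ℝ] F} (hf : ∀ x, HasStrictFDerivAt f (f' x : E →L[ℝ] F) x)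
    {K : NNReal} (hK : AntilipschitzWith K f) : ∃ L : E ≃ₜ F, ⇑L = f := by
  have hcont : Continuous f := continuous_iff_continuousAt.2 fun x ↦ (hf x).continuousAt
  have hopen : IsOpenMap f := isOpenMap_of_hasStrictFDerivAt_equiv hf
  have hclopen : IsClopen (range f) :=
    ⟨isClosed_range_of_antilipschitzWith hK hcont, hopen.isOpen_range⟩
  have hsurj := range_eq_univ.1 (hclopen.eq_univ (range_nonempty f))
  exact ⟨(Equiv.ofBijective f ⟨hK.injective, hsurj⟩).toHomeomorphOfContinuousOpen hcont hopen, rfl⟩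

variable {E : Type*} [NormedAddCommGroup E] [InnerProductSpace ℝ E]

theorem exists_homeomorph_id_add [CompleteSpace E] {T : E → E} {T' : E → E →L[ℝ] E}
    (hT : ∀ x, HasFDerivAt T (T' x) x) (hc : Continuous T') (hT' : ∀ x v, 0 ≤ ⟪T' x v, v⟫) :
    ∃ (L : E ≃ₜ E) (L' : E → E ≃L[ℝ] E),
      (∀ x, HasFDerivAt L (L' x : E →L[ℝ] E) x) ∧ ∀ x v, L' x v = v + T' x v := by
  choose L' hL' using fun x ↦ exists_continuousLinearEquiv_id_add (hT' x)
  have hL'eq (x : E) : (L' x : E →L[ℝ] E) = .id ℝ E + T' x := by ext v; simp [hL']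
  have hderiv (x : E) : HasStrictFDerivAt (fun x ↦ x + T x) (L' x : E →L[ℝ] E) x := by
    rw [hL'eq]
    exact (hasStrictFDerivAt_id x).add (hasStrictFDerivAt_of_hasFDerivAt_of_continuousAt
      (.of_forall hT) hc.continuousAt)
  obtain ⟨L, hL⟩ := exists_homeomorph_of_antilipschitzWith hderiv
    (antilipschitzWith_one_id_add (inner_sub_nonneg_of_hasFDerivAt hT hT'))
  exact ⟨L, L', fun x ↦ hL ▸ (hderiv x).hasFDerivAt, hL'⟩

end GlobalInverse

section Plane

open Complex

section Liouville

variable {F : Type*} [NormedAddCommGroup F] [NormedSpace ℂ F] [CompleteSpace F]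

lemma exists_forall_hasDerivAt_of_norm_deriv_le {g : ℂ → F} (hg : Differentiable ℂ g) {C : ℝ}
    (hC : ∀ z, ‖deriv g z‖ ≤ C) : ∃ α : F, ∀ z, HasDerivAt g α z := by
  have hbdd : Bornology.IsBounded (Set.range (deriv g)) :=
    isBounded_iff_forall_norm_le.2 ⟨C, Set.forall_mem_range.2 hC⟩
  refine ⟨deriv g 0, fun z ↦ ?_⟩
  rw [← ((hg.contDiff (n := 2)).differentiable_deriv_two).apply_eq_apply_of_bounded hbdd z 0]
  exact (hg z).hasDerivAt

lemma exists_forall_apply_eq_smul {L : ℂ ≃ₜ ℂ} {L' : ℂ → ℂ ≃L[ℝ] ℂ} {h : ℂ → F}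
    {h' : ℂ → ℂ →L[ℝ] F} {C : ℝ} (hL : ∀ z, HasFDerivAt L (L' z : ℂ →L[ℝ] ℂ) z)
    (hh : ∀ z, HasFDerivAt h (h' z) z)
    (hI : ∀ z, h' z ((L' z).symm I) = I • h' z ((L' z).symm 1))
    (hC : ∀ z, ‖h' z ((L' z).symm 1)‖ ≤ C) : ∃ α : F, ∀ z w, h' z w = L' z w • α := by
  have hderiv (z : ℂ) :
      HasFDerivAt (h ∘ L.symm) (h' z ∘L ((L' z).symm : ℂ →L[ℝ] ℂ)) (L z) := by
    have hinv : HasFDerivAt L.symm ((L' z).symm : ℂ →L[ℝ] ℂ) (L z) :=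
      .of_local_left_inverse L.symm.continuous.continuousAt (by simpa using hL z)
        (.of_forall L.apply_symm_apply)
    exact HasFDerivAt.comp (L z) (by simpa using hh z) hinv
  have hholo (z : ℂ) : HasDerivAt (h ∘ L.symm) (h' z ((L' z).symm 1)) (L z) := by
    have hCR : fderiv ℝ (h ∘ L.symm) (L z) I = I • fderiv ℝ (h ∘ L.symm) (L z) 1 := by
      simpa [(hderiv z).fderiv] using hI z
    simpa [(hderiv z).fderiv] using complexOfReal_hasDerivAt (hderiv z).differentiableAt hCR
  obtain ⟨α, hα⟩ := exists_forall_hasDerivAt_of_norm_deriv_le (g := h ∘ L.symm) (C := C)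
    (L.surjective.forall.2 fun z ↦ (hholo z).differentiableAt)
    (L.surjective.forall.2 fun z ↦ (hholo z).deriv ▸ hC z)
  refine ⟨α, fun z w ↦ ?_⟩
  have huniq := (hderiv z).unique ((hα (L z)).hasFDerivAt.restrictScalars ℝ)
  simpa using DFunLike.congr_fun huniq (L' z w)

end Liouville

section PoincareLemma

variable {F : Type*} [NormedAddCommGroup F] [NormedSpace ℝ F]

lemma exists_forall_hasFDerivAt_of_fderiv_apply_I_one [CompleteSpace F] {ω : ℂ → ℂ →L[ℝ] F}
    (hω : Differentiable ℝ ω) (hclosed : ∀ z, fderiv ℝ ω z I 1 = fderiv ℝ ω z 1 I) :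
    ∃ u : ℂ → F, ∀ z, HasFDerivAt u (ω z) z := by
  have hsymm (z v w : ℂ) : fderiv ℝ ω z v w = fderiv ℝ ω z w v := by
    have hbasis (x : ℂ) : x = x.re • (1 : ℂ) + x.im • I := by simp
    rw [hbasis v, hbasis w]
    simp only [map_add, map_smul, add_apply, smul_apply, hclosed]
    module
  obtain ⟨u, hu⟩ := convex_univ.exists_forall_hasFDerivAt_of_fderiv_symmetric isOpen_univ
    hω.differentiableOn fun z _ ↦ hsymm z
  exact ⟨u, fun z ↦ hu z trivial⟩

lemma exists_forall_hasFDerivAt_neg_comp_I_smul {M : ℂ → ℂ →L[ℝ] ℂ} {u' : ℂ → ℂ →L[ℝ] ℝ}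
    (hM : Differentiable ℝ M) (hMclosed : ∀ z, fderiv ℝ M z I 1 = fderiv ℝ M z 1 I)
    (hu' : Differentiable ℝ u')
    (hdiv : ∀ z, fderiv ℝ u' z I (I * M z 1) = fderiv ℝ u' z 1 (I * M z I)) :
    ∃ v : ℂ → ℝ, ∀ z, HasFDerivAt v (-(u' z ∘L (I • M z))) z := by
  have hderiv (z : ℂ) : HasFDerivAt (fun z ↦ -(u' z ∘L (I • M z))) _ z :=
    ((hu' z).hasFDerivAt.clm_comp ((hM z).hasFDerivAt.const_smul I)).neg
  refine exists_forall_hasFDerivAt_of_fderiv_apply_I_one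
    (fun z ↦ (hderiv z).differentiableAt) fun z ↦ ?_
  rw [(hderiv z).fderiv]
  simp [hMclosed, hdiv]

end PoincareLemma

section Metric

variable {H : Type*} [NormedAddCommGroup H] [InnerProductSpace ℝ H]

/-- A Riemannian metric of area element one at a point of the plane `ℂ ≅ ℝ²`, given as a positive
definite symmetric operator `M` of determinant one. Together with positivity, `M ∘ I ∘ M = I` says
both that `M` is symmetric and that `det M = 1`, and it makes `I ∘ M` the complex structure of the
metric. -/
structure IsUnimodularMetric (M : ℂ →L[ℝ] ℂ) : Prop where
  inner_nonneg : ∀ v, 0 ≤ ⟪M v, v⟫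
  apply_I_mul : ∀ v, M (I * M v) = I * v

/-- The determinant of the metric induced on the graph of a map with partial derivatives `p` and
`q`, i.e. the square of its area element. -/
noncomputable def gramDet (p q : H) : ℝ := (1 + ‖p‖ ^ 2) * (1 + ‖q‖ ^ 2) - ⟪p, q⟫ ^ 2

/-- The metric `1 + Dfᵀ Df` induced on the graph of a map `f` with partial derivatives `p` and `q`,
as an operator on `ℂ ≅ ℝ²`. -/
noncomputable def metricTensor (p q : H) : ℂ →L[ℝ] ℂ :=
  reCLM.smulRight ((1 + ‖p‖ ^ 2) • 1 + ⟪p, q⟫ • I : ℂ) +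
    imCLM.smulRight (⟪p, q⟫ • 1 + (1 + ‖q‖ ^ 2) • I : ℂ)

/-- The induced metric of the graph, rescaled within its conformal class to area element one. -/
noncomputable def conformalTensor (p q : H) : ℂ →L[ℝ] ℂ :=
  (√(gramDet p q))⁻¹ • metricTensor p q

lemma metricTensor_apply_one (p q : H) :
    metricTensor p q 1 = (1 + ‖p‖ ^ 2) • (1 : ℂ) + ⟪p, q⟫ • I := by
  simp [metricTensor]

lemma metricTensor_apply_I (p q : H) :
    metricTensor p q I = ⟪p, q⟫ • (1 : ℂ) + (1 + ‖q‖ ^ 2) • I := by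
  simp [metricTensor]

lemma metricTensor_apply_re (p q : H) (v : ℂ) :
    (metricTensor p q v).re = v.re * (1 + ‖p‖ ^ 2) + v.im * ⟪p, q⟫ := by
  simp [metricTensor, -real_smul, smul_re]

lemma metricTensor_apply_im (p q : H) (v : ℂ) :
    (metricTensor p q v).im = v.re * ⟪p, q⟫ + v.im * (1 + ‖q‖ ^ 2) := by
  simp [metricTensor, -real_smul, smul_im]

lemma gramDet_pos (p q : H) : 0 < gramDet p q := by
  have hcs : ⟪p, q⟫ ^ 2 ≤ ‖p‖ ^ 2 * ‖q‖ ^ 2 := by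
    simpa [sq, mul_mul_mul_comm] using real_inner_mul_inner_self_le p q
  rw [gramDet]
  nlinarith [sq_nonneg ‖p‖, sq_nonneg ‖q‖]

lemma inner_metricTensor_apply_self (p q : H) (v : ℂ) :
    ⟪metricTensor p q v, v⟫ = ‖v‖ ^ 2 + ‖v.re • p + v.im • q‖ ^ 2 := by
  rw [norm_add_sq_real, Complex.sq_norm, Complex.normSq_apply]
  simp only [Complex.inner, norm_smul, inner_smul_left, inner_smul_right, mul_pow, mul_re, conj_re,
    conj_im, metricTensor_apply_re, metricTensor_apply_im, Real.norm_eq_abs, sq_abs,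
    Real.ringHom_apply]
  ring

lemma metricTensor_I_mul_metricTensor (p q : H) (v : ℂ) :
    metricTensor p q (I * metricTensor p q v) = gramDet p q • (I * v) := by
  apply Complex.ext <;>
    simp only [metricTensor_apply_re, metricTensor_apply_im, gramDet, smul_re, smul_im, I_mul_re,
      I_mul_im, smul_eq_mul] <;>
    ring

lemma isUnimodularMetric_conformalTensor (p q : H) : IsUnimodularMetric (conformalTensor p q) where
  inner_nonneg v := by
    rw [conformalTensor, smul_apply, inner_smul_left, inner_metricTensor_apply_self]
    simp only [conj_trivial]
    positivity
  apply_I_mul v := by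
    have h := gramDet_pos p q
    simp only [conformalTensor, smul_apply, mul_smul_comm, map_smul,
      metricTensor_I_mul_metricTensor, smul_smul]
    rw [← mul_assoc, ← mul_inv, Real.mul_self_sqrt h.le, inv_mul_cancel₀ h.ne', one_smul]

end Metric

section MetricDerivative

variable {E H : Type*} [NormedAddCommGroup E] [NormedSpace ℝ E] [NormedAddCommGroup H]
  [InnerProductSpace ℝ H] {p q : E → H} {z : E}

lemma differentiableAt_metricTensor (hp : DifferentiableAt ℝ p z) (hq : DifferentiableAt ℝ q z) :
    DifferentiableAt ℝ (fun z ↦ metricTensor (p z) (q z)) z := by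
  have hsmulRight (ℓ : ℂ →L[ℝ] ℝ) {a : E → ℂ} (ha : DifferentiableAt ℝ a z) :
      DifferentiableAt ℝ (fun z ↦ ℓ.smulRight (a z)) z :=
    (ContinuousLinearMap.smulRightL ℝ ℂ ℂ ℓ).differentiableAt.comp z ha
  have hinner := hp.inner ℝ hq
  refine (hsmulRight reCLM ?_).add (hsmulRight imCLM ?_)
  · have hnorm := hp.norm_sq ℝ
    fun_prop
  · have hnorm := hq.norm_sq ℝ
    fun_prop

lemma fderiv_metricTensor_apply_one (hp : DifferentiableAt ℝ p z) (hq : DifferentiableAt ℝ q z)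
    (v : E) : fderiv ℝ (fun z ↦ metricTensor (p z) (q z)) z v 1 =
      (2 * ⟪p z, fderiv ℝ p z v⟫) • 1 +
        (⟪p z, fderiv ℝ q z v⟫ + ⟪q z, fderiv ℝ p z v⟫) • I := by
  have hderiv : HasFDerivAt
      (fun z ↦ (1 + ‖p z‖ ^ 2) • (1 : ℂ) + ⟪p z, q z⟫ • I) _ z :=
    ((hp.hasFDerivAt.norm_sq.const_add 1).smul_const (1 : ℂ)).add
      ((hp.hasFDerivAt.inner ℝ hq.hasFDerivAt).smul_const I)
  rw [← fderiv_apply_const (differentiableAt_metricTensor hp hq)]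
  simp_rw [metricTensor_apply_one]
  rw [hderiv.fderiv]
  simp [-real_smul, real_inner_comm (q z)]

lemma fderiv_metricTensor_apply_I (hp : DifferentiableAt ℝ p z) (hq : DifferentiableAt ℝ q z)
    (v : E) : fderiv ℝ (fun z ↦ metricTensor (p z) (q z)) z v I =
      (⟪p z, fderiv ℝ q z v⟫ + ⟪q z, fderiv ℝ p z v⟫) • 1 +
        (2 * ⟪q z, fderiv ℝ q z v⟫) • I := by
  have hderiv : HasFDerivAt
      (fun z ↦ ⟪p z, q z⟫ • (1 : ℂ) + (1 + ‖q z‖ ^ 2) • I) _ z :=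
    ((hp.hasFDerivAt.inner ℝ hq.hasFDerivAt).smul_const (1 : ℂ)).add
      ((hq.hasFDerivAt.norm_sq.const_add 1).smul_const I)
  rw [← fderiv_apply_const (differentiableAt_metricTensor hp hq)]
  simp_rw [metricTensor_apply_I]
  rw [hderiv.fderiv]
  simp [-real_smul, real_inner_comm (q z)]

lemma fderiv_gramDet_apply (hp : DifferentiableAt ℝ p z) (hq : DifferentiableAt ℝ q z)
    (v : E) : fderiv ℝ (fun z ↦ gramDet (p z) (q z)) z v =
      2 * ((1 + ‖q z‖ ^ 2) * ⟪p z, fderiv ℝ p z v⟫ + (1 + ‖p z‖ ^ 2) * ⟪q z, fderiv ℝ q z v⟫ -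
        ⟪p z, q z⟫ * (⟪p z, fderiv ℝ q z v⟫ + ⟪q z, fderiv ℝ p z v⟫)) := by
  have hderiv : HasFDerivAt (fun z ↦ gramDet (p z) (q z)) _ z :=
    ((hp.hasFDerivAt.norm_sq.const_add 1).mul (hq.hasFDerivAt.norm_sq.const_add 1)).sub
      ((hp.hasFDerivAt.inner ℝ hq.hasFDerivAt).pow 2)
  rw [hderiv.fderiv]
  simp only [real_inner_comm (q z), Nat.add_one_sub_one, pow_one, nsmul_eq_mul, Nat.cast_ofNat,
    sub_apply, add_apply, smul_apply, ContinuousLinearMap.comp_apply, coe_innerSL_apply,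
    smul_eq_mul, ContinuousLinearMap.prod_apply, fderivInnerCLM_apply]
  ring

lemma differentiableAt_gramDet (hp : DifferentiableAt ℝ p z) (hq : DifferentiableAt ℝ q z) :
    DifferentiableAt ℝ (fun z ↦ gramDet (p z) (q z)) z :=
  (((hp.norm_sq ℝ).const_add 1).mul ((hq.norm_sq ℝ).const_add 1)).sub ((hp.inner ℝ hq).pow 2)

lemma hasFDerivAt_conformalTensor (hp : DifferentiableAt ℝ p z) (hq : DifferentiableAt ℝ q z) :
    HasFDerivAt (fun z ↦ conformalTensor (p z) (q z))
      ((√(gramDet (p z) (q z)) ^ 3)⁻¹ •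
        (gramDet (p z) (q z) • fderiv ℝ (fun z ↦ metricTensor (p z) (q z)) z -
          (2⁻¹ : ℝ) • (fderiv ℝ (fun z ↦ gramDet (p z) (q z)) z).smulRight
            (metricTensor (p z) (q z)))) z :=
  hasFDerivAt_inv_sqrt_smul (differentiableAt_gramDet hp hq).hasFDerivAt
    (differentiableAt_metricTensor hp hq).hasFDerivAt (gramDet_pos _ _)

lemma fderiv_conformalTensor_apply_I_one {p q : ℂ → H} {z : ℂ} (hp : DifferentiableAt ℝ p z)
    (hq : DifferentiableAt ℝ q z) (hpq : fderiv ℝ q z 1 = fderiv ℝ p z I)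
    (hsys : (1 + ‖q z‖ ^ 2) • fderiv ℝ p z 1 - (2 * ⟪p z, q z⟫) • fderiv ℝ p z I
      + (1 + ‖p z‖ ^ 2) • fderiv ℝ q z I = 0) :
    fderiv ℝ (fun z ↦ conformalTensor (p z) (q z)) z I 1 =
      fderiv ℝ (fun z ↦ conformalTensor (p z) (q z)) z 1 I := by
  have hsys_p := congrArg (⟪p z, ·⟫) hsys
  have hsys_q := congrArg (⟪q z, ·⟫) hsys
  simp only [inner_add_right, inner_sub_right, inner_smul_right, inner_zero_right] at hsys_p hsys_q
  rw [(hasFDerivAt_conformalTensor hp hq).fderiv]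
  simp only [smul_apply, sub_apply, ContinuousLinearMap.smulRight_apply, hpq,
    fderiv_metricTensor_apply_one hp hq, fderiv_metricTensor_apply_I hp hq,
    fderiv_gramDet_apply hp hq, metricTensor_apply_one, metricTensor_apply_I]
  congr 1
  apply Complex.ext
  · simp only [sub_re, add_re, smul_re, one_re, I_re, smul_eq_mul, gramDet]
    linear_combination ⟪p z, q z⟫ * hsys_p - (1 + ‖p z‖ ^ 2) * hsys_q
  · simp only [sub_im, add_im, smul_im, one_im, I_im, smul_eq_mul, gramDet]
    linear_combination (1 + ‖q z‖ ^ 2) * hsys_p - ⟪p z, q z⟫ * hsys_q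

end MetricDerivative

section Isothermal

namespace IsUnimodularMetric

variable {M : ℂ →L[ℝ] ℂ} {e : ℂ ≃L[ℝ] ℂ}

lemma norm_symm_apply_le (hM : IsUnimodularMetric M) (he : ∀ w, e w = w + M w) (ζ : ℂ) :
    ‖e.symm ζ‖ ≤ ‖ζ‖ := by
  simpa [← he] using norm_le_norm_add_of_inner_nonneg (hM.inner_nonneg (e.symm ζ))

lemma symm_apply_I (hM : IsUnimodularMetric M) (he : ∀ w, e w = w + M w) :
    e.symm I = I * M (e.symm 1) := by
  rw [e.symm_apply_eq, he, hM.apply_I_mul, ← mul_add, add_comm, ← he, e.apply_symm_apply, mul_one]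

end IsUnimodularMetric

variable {M : ℂ → ℂ →L[ℝ] ℂ} {T : ℂ → ℂ} {L : ℂ ≃ₜ ℂ} {L' : ℂ → ℂ ≃L[ℝ] ℂ}
  {u v : ℂ → ℝ} {u' : ℂ → ℂ →L[ℝ] ℝ} {K : ℝ}

/- `L` is holomorphic for the complex structure `I ∘ M`, and `v` is the conjugate of `u` for it, so
`u + i v` is an entire function of the coordinate `L`. -/
lemma exists_forall_apply_eq_re_mul (hM : ∀ z, IsUnimodularMetric (M z))
    (hL : ∀ z, HasFDerivAt L (L' z : ℂ →L[ℝ] ℂ) z) (hL' : ∀ z w, L' z w = w + M z w)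
    (hu : ∀ z, HasFDerivAt u (u' z) z) (hv : ∀ z, HasFDerivAt v (-(u' z ∘L (I • M z))) z)
    (hK : ∀ z, ‖u' z‖ ≤ K) : ∃ α : ℂ, ∀ z w, u' z w = (L' z w * α).re := by
  set h' : ℂ → ℂ →L[ℝ] ℂ := fun z ↦
    (u' z).smulRight (1 : ℂ) + (-(u' z ∘L (I • M z))).smulRight I
  have hh' (z w : ℂ) : h' z w = u' z w - u' z (I * M z w) * I := by simp [h', sub_eq_add_neg]
  have hCR (z : ℂ) : h' z ((L' z).symm I) = I • h' z ((L' z).symm 1) := by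
    have hI : I * M z (I * M z ((L' z).symm 1)) = -(L' z).symm 1 := by
      rw [(hM z).apply_I_mul, ← mul_assoc, I_mul_I, neg_one_mul]
    simp only [hh', (hM z).symm_apply_I (hL' z), hI, map_neg, ofReal_neg, smul_eq_mul]
    linear_combination (u' z (I * M z ((L' z).symm 1)) : ℂ) * I_mul_I
  have hbound (z : ℂ) : ‖h' z ((L' z).symm 1)‖ ≤ K * ‖(1 : ℂ)‖ + K * ‖I‖ := by
    have hu'_le (ζ : ℂ) : ‖(u' z ((L' z).symm ζ) : ℂ)‖ ≤ K * ‖ζ‖ := by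
      simpa using (u' z).le_of_opNorm_le_of_le (hK z) ((hM z).norm_symm_apply_le (hL' z) ζ)
    rw [hh', ← (hM z).symm_apply_I (hL' z)]
    exact (norm_sub_le _ _).trans (add_le_add (hu'_le 1) (by simpa using hu'_le I))
  obtain ⟨α, hα⟩ := exists_forall_apply_eq_smul hL
    (fun z ↦ ((hu z).smul_const (1 : ℂ)).add ((hv z).smul_const I)) hCR hbound
  refine ⟨α, fun z w ↦ ?_⟩
  rw [← smul_eq_mul, ← hα]
  simp

/- The coordinates `re` and `im` have the conjugates `im ∘ T` and `-re ∘ T`, so `L'` has a left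
inverse built from two complex constants. -/
lemma apply_eq_apply_of_isUnimodularMetric (hM : ∀ z, IsUnimodularMetric (M z))
    (hT : ∀ z, HasFDerivAt T (M z) z) (hL : ∀ z, HasFDerivAt L (L' z : ℂ →L[ℝ] ℂ) z)
    (hL' : ∀ z w, L' z w = w + M z w) (z₁ z₂ w : ℂ) : L' z₁ w = L' z₂ w := by
  have hre (z : ℂ) : HasFDerivAt (fun z ↦ (T z).im) (-(reCLM ∘L (I • M z))) z :=
    (imCLM.hasFDerivAt.comp z (hT z)).congr_fderiv (by ext; all_goals simp)
  have him (z : ℂ) : HasFDerivAt (fun z ↦ -(T z).re) (-(imCLM ∘L (I • M z))) z :=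
    (reCLM.hasFDerivAt.comp z (hT z)).neg.congr_fderiv (by ext; all_goals simp)
  obtain ⟨α, hα⟩ := exists_forall_apply_eq_re_mul hM hL hL' (fun _ ↦ reCLM.hasFDerivAt) hre
    fun _ ↦ le_rfl
  obtain ⟨β, hβ⟩ := exists_forall_apply_eq_re_mul hM hL hL' (fun _ ↦ imCLM.hasFDerivAt) him
    fun _ ↦ le_rfl
  let P : ℂ → ℂ := fun ζ ↦ ⟨(ζ * α).re, (ζ * β).re⟩
  have hleft (z : ℂ) : Function.LeftInverse P (L' z) := fun w ↦
    Complex.ext (hα z w).symm (hβ z w).symm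
  have hright : Function.RightInverse P (L' z₁) :=
    (hleft z₁).rightInverse_of_surjective (L' z₁).surjective
  rw [← hleft z₂ w, hright, hleft z₂ w]

theorem fderiv_eq_of_isUnimodularMetric (hM : ∀ z, IsUnimodularMetric (M z)) (hMc : Continuous M)
    (hT : ∀ z, HasFDerivAt T (M z) z) (hu : ∀ z, HasFDerivAt u (u' z) z)
    (hv : ∀ z, HasFDerivAt v (-(u' z ∘L (I • M z))) z) (hK : ∀ z, ‖u' z‖ ≤ K) (z₁ z₂ : ℂ) :
    u' z₁ = u' z₂ := by
  obtain ⟨L, L', hL, hL'⟩ := exists_homeomorph_id_add hT hMc fun z ↦ (hM z).inner_nonneg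
  obtain ⟨α, hα⟩ := exists_forall_apply_eq_re_mul hM hL hL' hu hv hK
  refine ContinuousLinearMap.ext fun w ↦ ?_
  rw [hα, hα, apply_eq_apply_of_isUnimodularMetric hM hT hL hL' z₁ z₂ w]

end Isothermal

section MinimalSurface

variable {H : Type*} [NormedAddCommGroup H] [InnerProductSpace ℝ H]

lemma apply_I_I_mul_conformalTensor {p q : H} {D : ℂ →L[ℝ] ℂ →L[ℝ] H} (hD : D I 1 = D 1 I)
    (hsys : (1 + ‖q‖ ^ 2) • D 1 1 - (2 * ⟪p, q⟫) • D I 1 + (1 + ‖p‖ ^ 2) • D I I = 0) :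
    D I (I * conformalTensor p q 1) = D 1 (I * conformalTensor p q I) := by
  have hI_I : I * I = (-1 : ℝ) • (1 : ℂ) := by simp
  simp only [conformalTensor, smul_apply, metricTensor_apply_one, metricTensor_apply_I,
    mul_smul_comm, mul_add, mul_one, hI_I, map_add, map_smul]
  congr 1
  rw [← hD, ← sub_eq_zero, ← hsys]
  module

theorem fderiv_eq_fderiv_of_minimal_surface_system {f : ℂ → H} {K : ℝ}
    (hf : Differentiable ℝ f) (hf' : Differentiable ℝ (fderiv ℝ f))
    (hsys : ∀ z, (1 + ‖fderiv ℝ f z I‖ ^ 2) • fderiv ℝ (fderiv ℝ f) z 1 1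
      - (2 * ⟪fderiv ℝ f z 1, fderiv ℝ f z I⟫) • fderiv ℝ (fderiv ℝ f) z I 1
      + (1 + ‖fderiv ℝ f z 1‖ ^ 2) • fderiv ℝ (fderiv ℝ f) z I I = 0)
    (hK : ∀ z, ‖fderiv ℝ f z‖ ≤ K) (z₁ z₂ : ℂ) : fderiv ℝ f z₁ = fderiv ℝ f z₂ := by
  have hpartial (w : ℂ) : Differentiable ℝ fun z ↦ fderiv ℝ f z w :=
    hf'.clm_apply (differentiable_const w)
  have hsymm (z : ℂ) : fderiv ℝ (fderiv ℝ f) z I 1 = fderiv ℝ (fderiv ℝ f) z 1 I :=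
    second_derivative_symmetric (fun z ↦ (hf z).hasFDerivAt) (hf' z).hasFDerivAt I 1
  set M : ℂ → ℂ →L[ℝ] ℂ := fun z ↦ conformalTensor (fderiv ℝ f z 1) (fderiv ℝ f z I)
  have hM : Differentiable ℝ M := fun z ↦
    (hasFDerivAt_conformalTensor (hpartial 1 z) (hpartial I z)).differentiableAt
  have hMuni (z : ℂ) : IsUnimodularMetric (M z) := isUnimodularMetric_conformalTensor _ _
  have hMclosed (z : ℂ) : fderiv ℝ M z I 1 = fderiv ℝ M z 1 I := by
    apply fderiv_conformalTensor_apply_I_one (hpartial 1 z) (hpartial I z) <;>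
      simp only [fderiv_apply_const (hf' z), hsymm]
    simpa only [hsymm] using hsys z
  obtain ⟨T, hT⟩ := exists_forall_hasFDerivAt_of_fderiv_apply_I_one hM hMclosed
  ext w
  refine ext_inner_left ℝ fun y ↦ ?_
  set u' : ℂ → ℂ →L[ℝ] ℝ := fun z ↦ innerSL ℝ y ∘L fderiv ℝ f z
  have hu (z : ℂ) : HasFDerivAt (fun z ↦ ⟪y, f z⟫) (u' z) z :=
    (innerSL ℝ y).hasFDerivAt.comp z (hf z).hasFDerivAt
  have hu' (z : ℂ) : HasFDerivAt u' _ z :=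
    (hasFDerivAt_const (innerSL ℝ y) z).clm_comp (hf' z).hasFDerivAt
  obtain ⟨v, hv⟩ := exists_forall_hasFDerivAt_neg_comp_I_smul hM hMclosed
    (fun z ↦ (hu' z).differentiableAt) fun z ↦ by
      simpa [(hu' z).fderiv] using
        congrArg (⟪y, ·⟫) (apply_I_I_mul_conformalTensor (hsymm z) (hsys z))
  have hbound (z : ℂ) : ‖u' z‖ ≤ ‖innerSL ℝ y‖ * K :=
    (ContinuousLinearMap.opNorm_comp_le _ _).trans (by gcongr; exact hK z)
  exact DFunLike.congr_fun
    (fderiv_eq_of_isUnimodularMetric hMuni hM.continuous hT hu hv hbound z₁ z₂) w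

end MinimalSurface

end Plane

theorem bernstein_minimal_surface_system_bounded_gradient_general {H : Type*}
    [NormedAddCommGroup H] [InnerProductSpace ℝ H] (f : ℝ × ℝ → H) (hf : Differentiable ℝ f)
    (hf' : Differentiable ℝ (fderiv ℝ f))
    (hsys : ∀ p, (1 + ‖fderiv ℝ f p (0, 1)‖ ^ 2) • fderiv ℝ (fderiv ℝ f) p (1, 0) (1, 0)
      - (2 * ⟪fderiv ℝ f p (1, 0), fderiv ℝ f p (0, 1)⟫) •
          fderiv ℝ (fderiv ℝ f) p (0, 1) (1, 0)
      + (1 + ‖fderiv ℝ f p (1, 0)‖ ^ 2) • fderiv ℝ (fderiv ℝ f) p (0, 1) (0, 1) = 0)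
    (hbd : ∃ M : ℝ, ∀ p, ‖fderiv ℝ f p‖ ≤ M) :
    ∃ (A : ℝ × ℝ →L[ℝ] H) (b : H), ∀ p, f p = A p + b := by
  obtain ⟨K, hK⟩ := hbd
  let e : ℂ ≃L[ℝ] ℝ × ℝ := Complex.equivRealProdCLM
  have hfderiv (z : ℂ) : fderiv ℝ (f ∘ e) z = fderiv ℝ f (e z) ∘L (e : ℂ →L[ℝ] ℝ × ℝ) :=
    e.comp_right_fderiv
  have hfderiv' (z : ℂ) := hasFDerivAt_fderiv_comp_continuousLinearEquiv e (hf' (e z))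
  have hbound (z : ℂ) : ‖fderiv ℝ (f ∘ e) z‖ ≤ K * ‖(e : ℂ →L[ℝ] ℝ × ℝ)‖ := by
    rw [hfderiv]
    exact (ContinuousLinearMap.opNorm_comp_le _ _).trans (by gcongr; exact hK _)
  have hconst := fderiv_eq_fderiv_of_minimal_surface_system (hf.comp e.differentiable)
    (fun z ↦ (hfderiv' z).differentiableAt)
    (fun z ↦ by simpa [hfderiv, (hfderiv' z).fderiv, e] using hsys (e z)) hbound
  have hf_const (p q : ℝ × ℝ) : fderiv ℝ f p = fderiv ℝ f q := by
    refine ContinuousLinearMap.ext fun v ↦ ?_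
    simpa [hfderiv] using DFunLike.congr_fun (hconst (e.symm p) (e.symm q)) (e.symm v)
  exact exists_eq_add_of_fderiv_eq hf hf_const

/-- **Chern–Osserman**: an entire `C²` solution `f : ℝ² → ℝᵏ` of the minimal surface system
with bounded (total) derivative is affine linear. -/
theorem bernstein_minimal_surface_system_bounded_gradient (k : ℕ) (hk : 1 ≤ k)
    (f : ℝ × ℝ → EuclideanSpace ℝ (Fin k)) (hf : ContDiff ℝ 2 f)
    (hsys : ∀ p : ℝ × ℝ,
      (1 + ‖fy f p‖ ^ 2) • fxx f p - (2 * ⟪fx f p, fy f p⟫) • fxy f p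
        + (1 + ‖fx f p‖ ^ 2) • fyy f p = 0)
    (hbd : ∃ M : ℝ, ∀ p : ℝ × ℝ, ‖fderiv ℝ f p‖ ≤ M) :
    ∃ (A : ℝ × ℝ →ₗ[ℝ] EuclideanSpace ℝ (Fin k)) (b : EuclideanSpace ℝ (Fin k)),
      ∀ p : ℝ × ℝ, f p = A p + b := by
  have hf' : Differentiable ℝ (fderiv ℝ f) := (hf.fderiv_right le_rfl).differentiable one_ne_zero
  obtain ⟨A, b, hA⟩ := bernstein_minimal_surface_system_bounded_gradient_general f
    (hf.differentiable two_ne_zero) hf'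
    (fun p ↦ by simp only [← fderiv_apply_const (hf' p)]; exact hsys p) hbd
  exact ⟨A, b, hA⟩
end
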